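/- arXiv:1601.02271 — 3 statements merged into one kernel-verified Lean document; each statement's English description precedes it below -/
import Mathlib

section
/- For every r ≥ 2 and every n of the form n = 1 + n₁ + C(n₁, r−1)·n₁, there is an r-uniform hypergraph G on n vertices with Δ₁(G)·Δ_{r−1}(G) = Θ(n) and a globally (r+1)^r-bounded coloring of K_n^{(r)} containing no properly colored copy of G. -/
/-- The degree of a vertex set `S` in a hypergraph `G`. -/
def hdeg {V : Type*} [DecidableEq V] (G : Finset (Finset V)) (S : Finset V) : ℕ :=
  (G.filter (fun e => S ⊆ e)).card

/-- The maximum `j`-degree of a hypergraph `G`. -/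
def maxDeg {V : Type*} [Fintype V] [DecidableEq V] (G : Finset (Finset V)) (j : ℕ) : ℕ :=
  ((Finset.univ : Finset V).powersetCard j).sup (hdeg G)

/-!
Cut the vertex set into blocks of size `r + 1`, with one smaller leftover block, and colour an
edge by the multiset of blocks its vertices lie in; a colour class then has at most `(r + 1) ^ r`
members. Two edges differing by the exchange of a vertex for another one in the same block have
the same colour. In the hypertree every non-core vertex can be exchanged in this way for a root,
and so can any two core vertices for one another in an edge through a root. Hence, in a properly
coloured copy, the block of a root contains no other non-core vertex and at most one core vertex,
so it has at most two elements and is the leftover block. The root alone could lie there, so a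
child of the root's neighbourhood is promoted to a second root, which changes the degrees by
bounded factors only; two roots would have to share the leftover block, which is impossible.
-/

section MaxDegree

open Finset

variable {V : Type*} [Fintype V] [DecidableEq V] {G : Finset (Finset V)} {j m : ℕ}

theorem hdeg_le_maxDeg (S : Finset V) (hS : #S = j) : hdeg G S ≤ maxDeg G j :=
  Finset.le_sup (f := hdeg G) (mem_powersetCard_univ.2 hS)

theorem maxDeg_le (h : ∀ S : Finset V, #S = j → hdeg G S ≤ m) : maxDeg G j ≤ m :=
  Finset.sup_le fun S hS => h S (mem_powersetCard_univ.1 hS)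

end MaxDegree

open Finset in
theorem exists_biUnion_eq_of_card_eq_mul {α ι : Type*} [DecidableEq α] {s : Finset α}
    {t : Finset ι} {m : ℕ} (h : #s = #t * m) :
    ∃ D : ι → Finset α, (∀ i ∈ t, #(D i) = m) ∧ t.biUnion D = s := by
  classical
  induction t using Finset.induction_on generalizing s with
  | empty =>
    have hs : s = ∅ := by simpa using h
    exact ⟨fun _ => ∅, by simp, by simp [hs]⟩
  | insert i t hi ih =>
    rw [card_insert_of_notMem hi, Nat.succ_mul] at h
    obtain ⟨s', hs', hcard⟩ := exists_subset_card_eq (h ▸ Nat.le_add_left m _)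
    obtain ⟨D, hDcard, hDunion⟩ := ih (s := s \ s') (by rw [card_sdiff_of_subset hs']; omega)
    have hne : ∀ j ∈ t, j ≠ i := fun j hj hji => hi (hji ▸ hj)
    refine ⟨Function.update D i s', fun j hj => ?_, ?_⟩
    · rcases mem_insert.1 hj with rfl | hj
      · rw [Function.update_self, hcard]
      · rw [Function.update_of_ne (hne j hj), hDcard j hj]
    · rw [biUnion_insert, Function.update_self,
        biUnion_congr rfl fun j hj => Function.update_of_ne (hne j hj) s' D, hDunion,
        union_sdiff_of_subset hs']

section BlockColor

open Finset

variable {V W β γ : Type*}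

/-- The colour of an edge `e` induced by a map `b` sending each vertex to the name of its block: the
multiset of blocks met by `e`, counted with multiplicity. -/
def blockColor (b : V → β) (e : Finset V) : Multiset β := e.val.map b

theorem card_blockColor (b : V → β) (e : Finset V) : (blockColor b e).card = #e :=
  Multiset.card_map _ _

theorem blockColor_insert [DecidableEq V] (b : V → β) {x : V} {T : Finset V} (hx : x ∉ T) :
    blockColor b (insert x T) = b x ::ₘ blockColor b T := by
  rw [blockColor, insert_val_of_notMem hx, Multiset.map_cons, blockColor]

theorem blockColor_image [DecidableEq W] {f : V → W} (hf : f.Injective) (b : W → β)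
    (e : Finset V) : blockColor b (e.image f) = blockColor (b ∘ f) e := by
  rw [blockColor, image_val_of_injOn hf.injOn, Multiset.map_map, blockColor]

theorem card_filter_blockColor_eq_le [Fintype V] [DecidableEq β] {b : V → β} {k : ℕ}
    (hb : ∀ a, #{x | b x = a} ≤ k) (M : Multiset β) :
    #{e | blockColor b e = M} ≤ k ^ M.card := by
  classical
  induction M using Multiset.induction_on with
  | empty =>
    have hempty : ({e | blockColor b e = 0} : Finset (Finset V)) ⊆ {∅} := fun e he => by
      simpa [blockColor] using he
    simpa using card_le_card hempty
  | cons a M ih =>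
    have hcover : ({e | blockColor b e = a ::ₘ M} : Finset (Finset V)) ⊆
        ({x | b x = a} : Finset V).biUnion fun x => image (insert x) {e | blockColor b e = M} := by
      intro e he
      have he' : blockColor b e = a ::ₘ M := (mem_filter.1 he).2
      obtain ⟨x, hxe, hxa⟩ := Multiset.mem_map.1 (he' ▸ Multiset.mem_cons_self a M)
      have hxe : x ∈ e := hxe
      rw [← insert_erase hxe, blockColor_insert b (notMem_erase x e), hxa,
        Multiset.cons_inj_right] at he'
      simp only [mem_biUnion, mem_filter, mem_univ, true_and, mem_image]
      exact ⟨x, hxa, e.erase x, he', insert_erase hxe⟩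
    calc #{e | blockColor b e = a ::ₘ M}
        ≤ #{x | b x = a} * k ^ M.card :=
          (card_le_card hcover).trans (card_biUnion_le_card_mul _ _ _ fun _ _ =>
            card_image_le.trans ih)
      _ ≤ k * k ^ M.card := Nat.mul_le_mul_right _ (hb a)
      _ = k ^ (a ::ₘ M).card := by rw [Multiset.card_cons, pow_succ']

theorem card_filter_comp_blockColor_eq_le [Fintype V] [DecidableEq β] [DecidableEq γ] {b : V → β}
    {g : Multiset β → γ} (hg : g.Injective) {k : ℕ} (hb : ∀ a, #{x | b x = a} ≤ k) (r : ℕ)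
    (c : γ) :
    #{e ∈ (univ : Finset V).powersetCard r | g (blockColor b e) = c} ≤ k ^ r := by
  rcases eq_empty_or_nonempty
    {e ∈ (univ : Finset V).powersetCard r | g (blockColor b e) = c} with h | ⟨e₀, h₀⟩
  · simp only [h, card_empty, zero_le]
  · obtain ⟨hcard, hcol⟩ := mem_filter.1 h₀
    have hsub : {e ∈ (univ : Finset V).powersetCard r | g (blockColor b e) = c} ⊆
        ({e | blockColor b e = blockColor b e₀} : Finset (Finset V)) := fun e he =>
      mem_filter.2 ⟨mem_univ e, hg ((mem_filter.1 he).2.trans hcol.symm)⟩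
    have hle := (card_le_card hsub).trans (card_filter_blockColor_eq_le hb (blockColor b e₀))
    rwa [card_blockColor, mem_powersetCard_univ.1 hcard] at hle

end BlockColor

section ProperlyColored

open Finset

variable {V β γ : Type*} [DecidableEq V] {G : Finset (Finset V)}

/-- The colouring `col` is proper on the hypergraph `G`: distinct overlapping edges of `G` get
distinct colours. A copy `f` of `G` inside a coloured complete hypergraph is encoded by pulling the
colouring back along `f`. -/
def ProperlyColored (G : Finset (Finset V)) (col : Finset V → γ) : Prop :=
  ∀ e₁ ∈ G, ∀ e₂ ∈ G, e₁ ≠ e₂ → (e₁ ∩ e₂).Nonempty → col e₁ ≠ col e₂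

theorem ProperlyColored.ne_of_insert_mem {c : V → β} (h : ProperlyColored G (blockColor c))
    {T : Finset V} (hT : T.Nonempty) {x y : V} (hx : x ∉ T) (hy : y ∉ T) (hxy : x ≠ y)
    (hxG : insert x T ∈ G) (hyG : insert y T ∈ G) : c x ≠ c y := by
  intro hc
  have hne : insert x T ≠ insert y T := fun heq =>
    (mem_insert.1 (heq ▸ mem_insert_self x T)).elim hxy hx
  have hoverlap : (insert x T ∩ insert y T).Nonempty :=
    hT.mono (subset_inter (subset_insert x T) (subset_insert y T))
  exact h _ hxG _ hyG hne hoverlap (by rw [blockColor_insert c hx, blockColor_insert c hy, hc])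

end ProperlyColored

section DivBlocks

open Finset

variable {n k : ℕ}

theorem card_filter_val_div_eq (hk : 0 < k) (a : ℕ) :
    #{x : Fin n | x.val / k = a} = min n (a * k + k) - a * k := by
  have hmap : ({x : Fin n | x.val / k = a} : Finset (Fin n)).map Fin.valEmbedding =
      Ico (a * k) (min n (a * k + k)) := by
    ext y
    simp only [mem_map, mem_filter, mem_univ, true_and, Fin.valEmbedding_apply, mem_Ico, lt_min_iff,
      Nat.div_eq_iff hk]
    constructor
    · rintro ⟨x, hx, rfl⟩
      have := x.isLt
      omega
    · rintro ⟨hle, hlt, hlt'⟩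
      exact ⟨⟨y, hlt⟩, by dsimp only; omega, rfl⟩
  rw [← card_map, hmap, Nat.card_Ico]

theorem card_filter_val_div_eq_le (hk : 0 < k) (a : ℕ) : #{x : Fin n | x.val / k = a} ≤ k := by
  rw [card_filter_val_div_eq hk]
  omega

theorem val_div_eq_of_card_filter_lt (x : Fin n) (h : #{y : Fin n | y.val / k = x.val / k} < k) :
    x.val / k = n / k := by
  have hk : 0 < k := (Nat.zero_le _).trans_lt h
  rw [card_filter_val_div_eq hk] at h
  refine le_antisymm (Nat.div_le_div_right x.isLt.le) (Nat.lt_succ_iff.1 ?_)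
  rw [Nat.div_lt_iff_lt_mul hk, Nat.succ_mul]
  omega

end DivBlocks

/-- A two-level hypertree of uniformity `k + 1` on the vertex type `V`. Its edges are the sets
`S ∪ {u}`, where `S` is a `k`-subset of the core (the first level) and `u` is one of the leaves
attached to `S`; the values of `leaves` at other sets play no role. The root of a hypertree is
encoded as a leaf attached to every `S`, so that there can be several roots. -/
structure Hypertree (V : Type*) (k : ℕ) where
  core : Finset V
  leaves : Finset V → Finset V
  notMem_core : ∀ S ∈ core.powersetCard k, ∀ u ∈ leaves S, u ∉ core

namespace Hypertree

open Finset

variable {V β : Type*} {k : ℕ} {v w x : V} {S T e : Finset V}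

/-- A root of a hypertree: a vertex attached to every `k`-subset of the core. -/
def IsRoot (H : Hypertree V k) (v : V) : Prop := ∀ S ∈ H.core.powersetCard k, v ∈ H.leaves S

/-- A hypertree spans the vertex type if every vertex outside the core is attached to some
`k`-subset of the core. -/
def IsSpanning (H : Hypertree V k) : Prop :=
  ∀ w, w ∉ H.core → ∃ S ∈ H.core.powersetCard k, w ∈ H.leaves S

theorem notMem_of_mem_leaves (H : Hypertree V k) (hS : S ∈ H.core.powersetCard k)
    (hx : x ∈ H.leaves S) : x ∉ S :=
  fun hxS => H.notMem_core S hS x hx ((mem_powersetCard.1 hS).1 hxS)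

theorem IsRoot.notMem_core {H : Hypertree V k} (hv : H.IsRoot v) (hk : k ≤ #H.core) :
    v ∉ H.core := by
  obtain ⟨S, hS⟩ := powersetCard_nonempty.2 hk
  exact H.notMem_core S hS v (hv S hS)

theorem exists_core_root_children [Fintype V] [DecidableEq V] {N : ℕ}
    (hV : Fintype.card V = 1 + N + N.choose k * N) :
    ∃ (L : Finset V) (v : V) (D : Finset V → Finset V), #L = N ∧ v ∉ L ∧
      (∀ S ∈ L.powersetCard k, #(D S) = N) ∧ (L.powersetCard k).biUnion D = (insert v L)ᶜ := by
  obtain ⟨L, -, hL⟩ := exists_subset_card_eq (s := (univ : Finset V)) (n := N)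
    (by rw [card_univ]; omega)
  obtain ⟨v, hv⟩ : Lᶜ.Nonempty := by
    rw [← card_pos, card_compl]
    omega
  rw [mem_compl] at hv
  have hrest : #(insert v L)ᶜ = #(L.powersetCard k) * N := by
    rw [card_compl, card_insert_of_notMem hv, card_powersetCard, hL]
    omega
  obtain ⟨D, hDcard, hD⟩ := exists_biUnion_eq_of_card_eq_mul hrest
  exact ⟨L, v, D, hL, hv, hDcard, hD⟩

theorem exists_isSpanning_two_roots [Fintype V] {N : ℕ} (hkN : k ≤ N) (hN : 0 < N)
    (hV : Fintype.card V = 1 + N + N.choose k * N) :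
    ∃ (H : Hypertree V k) (v v' : V), #H.core = N ∧ H.IsSpanning ∧ H.IsRoot v ∧ H.IsRoot v' ∧
      v ≠ v' ∧ ∀ S ∈ H.core.powersetCard k, N ≤ #(H.leaves S) ∧ #(H.leaves S) ≤ N + 2 := by
  classical
  obtain ⟨L, v, D, rfl, hv, hDcard, hD⟩ := exists_core_root_children hV
  obtain ⟨S₀, hS₀⟩ := powersetCard_nonempty.2 hkN
  obtain ⟨v', hv'⟩ : (D S₀).Nonempty := card_pos.1 ((hDcard S₀ hS₀).symm ▸ hN)
  have hDL : ∀ S ∈ L.powersetCard k, ∀ u ∈ D S, u ∉ insert v L := fun S hS u hu =>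
    mem_compl.1 (hD ▸ mem_biUnion.2 ⟨S, hS, hu⟩)
  have hv'L := hDL S₀ hS₀ v' hv'
  rw [mem_insert, not_or] at hv'L
  let H : Hypertree V k :=
    { core := L
      leaves := fun S => insert v (insert v' (D S))
      notMem_core := fun S hS u hu huL => by
        rcases mem_insert.1 hu with rfl | hu
        · exact hv huL
        · exact (mem_insert.1 hu).elim (fun h => hv'L.2 (h ▸ huL)) fun h =>
            hDL S hS u h (mem_insert_of_mem huL) }
  have hroot : H.IsRoot v := fun _ _ => mem_insert_self _ _
  have hspan : H.IsSpanning := by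
    intro w hw
    by_cases hwv : w = v
    · exact ⟨S₀, hS₀, hwv ▸ hroot S₀ hS₀⟩
    · have hwD : w ∈ (L.powersetCard k).biUnion D :=
        hD ▸ mem_compl.2 fun h => (mem_insert.1 h).elim hwv hw
      obtain ⟨S, hS, hwS⟩ := mem_biUnion.1 hwD
      exact ⟨S, hS, mem_insert_of_mem (mem_insert_of_mem hwS)⟩
  refine ⟨H, v, v', rfl, hspan, hroot, fun _ _ => mem_insert_of_mem (mem_insert_self _ _),
    Ne.symm hv'L.1, fun S hS => ?_⟩
  have hsub : D S ⊆ H.leaves S := (subset_insert _ _).trans (subset_insert _ _)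
  have hle : #(H.leaves S) ≤ #(D S) + 2 :=
    (card_insert_le _ _).trans (Nat.succ_le_succ (card_insert_le _ _))
  exact ⟨hDcard S hS ▸ card_le_card hsub, hDcard S hS ▸ hle⟩

variable [DecidableEq V]

/-- The edge set of a hypertree. -/
def edges (H : Hypertree V k) : Finset (Finset V) :=
  (H.core.powersetCard k).biUnion fun S => (H.leaves S).image fun u => insert u S

section Edges

variable (H : Hypertree V k)

theorem mem_edges :
    e ∈ H.edges ↔ ∃ S ∈ H.core.powersetCard k, ∃ u ∈ H.leaves S, insert u S = e := by
  simp only [edges, mem_biUnion, mem_image]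

theorem card_of_mem_edges (he : e ∈ H.edges) : #e = k + 1 := by
  obtain ⟨S, hS, u, hu, rfl⟩ := H.mem_edges.1 he
  rw [card_insert_of_notMem (H.notMem_of_mem_leaves hS hu), (mem_powersetCard.1 hS).2]

theorem insert_inter_core (hS : S ∈ H.core.powersetCard k) (hx : x ∈ H.leaves S) :
    insert x S ∩ H.core = S := by
  rw [insert_inter_of_notMem (H.notMem_core S hS x hx),
    inter_eq_left.2 (mem_powersetCard.1 hS).1]

theorem hdeg_edges (T : Finset V) :
    hdeg H.edges T = ∑ S ∈ H.core.powersetCard k, #{u ∈ H.leaves S | T ⊆ insert u S} := by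
  have hdisj : ((H.core.powersetCard k : Finset (Finset V)) : Set (Finset V)).PairwiseDisjoint
      fun S => {u ∈ H.leaves S | T ⊆ insert u S}.image fun u => insert u S := by
    intro S hS S' hS' hne
    refine Finset.disjoint_left.2 fun e he he' => hne ?_
    obtain ⟨u, hu, rfl⟩ := mem_image.1 he
    obtain ⟨u', hu', heq⟩ := mem_image.1 he'
    rw [← H.insert_inter_core hS (mem_filter.1 hu).1, ← heq,
      H.insert_inter_core hS' (mem_filter.1 hu').1]
  simp only [hdeg, edges, filter_biUnion, filter_image]
  rw [card_biUnion hdisj]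
  refine sum_congr rfl fun S hS => card_image_of_injOn fun u hu u' _ heq => ?_
  have hmem : u ∈ insert u' S := heq ▸ mem_insert_self u S
  exact (mem_insert.1 hmem).resolve_right (H.notMem_of_mem_leaves hS (mem_filter.1 hu).1)

theorem hdeg_edges_singleton_of_notMem_core (hw : w ∉ H.core) :
    hdeg H.edges {w} = #{S ∈ H.core.powersetCard k | w ∈ H.leaves S} := by
  rw [hdeg_edges, card_filter]
  refine sum_congr rfl fun S hS => ?_
  have hwS : w ∉ S := fun h => hw ((mem_powersetCard.1 hS).1 h)
  simp only [singleton_subset_iff, mem_insert, hwS, or_false, filter_eq]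
  split_ifs <;> rfl

theorem hdeg_edges_singleton_of_mem_core (hx : x ∈ H.core) :
    hdeg H.edges {x} = ∑ S ∈ H.core.powersetCard k with x ∈ S, #(H.leaves S) := by
  rw [hdeg_edges, sum_filter]
  refine sum_congr rfl fun S hS => ?_
  have hfilter : {u ∈ H.leaves S | {x} ⊆ insert u S} = {_u ∈ H.leaves S | x ∈ S} := by
    refine filter_congr fun u hu => ?_
    have hxu : x ≠ u := fun h => H.notMem_core S hS u hu (h ▸ hx)
    simp only [singleton_subset_iff, mem_insert, hxu, false_or]
  rw [hfilter, filter_const]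
  split_ifs <;> rfl

theorem hdeg_edges_of_mem_powersetCard (hT : T ∈ H.core.powersetCard k) :
    hdeg H.edges T = #(H.leaves T) := by
  have hTcore := mem_powersetCard.1 hT
  rw [hdeg_edges, sum_eq_single_of_mem T hT]
  · rw [filter_true_of_mem fun _ _ => subset_insert _ _]
  · intro S hS hne
    rw [card_eq_zero, filter_eq_empty_iff]
    intro u hu hTu
    have hTS : T ⊆ S := H.insert_inter_core hS hu ▸ subset_inter hTu hTcore.1
    exact hne (eq_of_subset_of_card_le hTS
      ((mem_powersetCard.1 hS).2.trans hTcore.2.symm).le).symm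

theorem hdeg_edges_le_card_core (hTcard : #T = k) (hT : ¬T ⊆ H.core) :
    hdeg H.edges T ≤ #H.core := by
  have hsub : {e ∈ H.edges | T ⊆ e} ⊆ H.core.image fun y => insert y T := by
    intro e he
    obtain ⟨heG, hTe⟩ := mem_filter.1 he
    have hecard := H.card_of_mem_edges heG
    obtain ⟨y, hy⟩ : (e \ T).Nonempty := by
      rw [← card_pos, card_sdiff_of_subset hTe]
      omega
    obtain ⟨hye, hyT⟩ := mem_sdiff.1 hy
    have hyTe : insert y T = e := eq_of_subset_of_card_le (insert_subset hye hTe)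
      (by rw [card_insert_of_notMem hyT, hecard, hTcard])
    refine mem_image.2 ⟨y, ?_, hyTe⟩
    obtain ⟨S, hS, u, -, rfl⟩ := H.mem_edges.1 heG
    have hScore := (mem_powersetCard.1 hS).1
    obtain ⟨z, hzT, hz⟩ := not_subset.1 hT
    have hzu : z = u := (mem_insert.1 (hTe hzT)).resolve_right fun h => hz (hScore h)
    exact hScore ((mem_insert.1 hye).resolve_left fun h => hyT (h ▸ hzu ▸ hzT))
  exact (card_le_card hsub).trans card_image_le

end Edges

section MaxDegree

variable [Fintype V] {H : Hypertree V k} {c : ℕ}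

theorem IsRoot.choose_le_maxDeg_one (hv : H.IsRoot v) (hk : k ≤ #H.core) :
    (#H.core).choose k ≤ maxDeg H.edges 1 := by
  refine Eq.trans_le ?_ (hdeg_le_maxDeg {v} (card_singleton v))
  rw [H.hdeg_edges_singleton_of_notMem_core (hv.notMem_core hk), filter_true_of_mem hv,
    card_powersetCard]

theorem maxDeg_one_le (hk : 0 < k) (hc : 0 < c)
    (hleaves : ∀ S ∈ H.core.powersetCard k, #(H.leaves S) ≤ c * #H.core) :
    maxDeg H.edges 1 ≤ c * k * (#H.core).choose k := by
  refine maxDeg_le fun X hX => ?_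
  obtain ⟨x, rfl⟩ := card_eq_one.1 hX
  by_cases hx : x ∈ H.core
  · have hthrough : #{S ∈ H.core.powersetCard k | x ∈ S} = (#H.core - 1).choose (k - 1) := by
      simpa using card_filter_powersetCard_subset {x} H.core k (singleton_subset_iff.2 hx) hk
    have hchoose : #H.core * (#H.core - 1).choose (k - 1) = (#H.core).choose k * k := by
      simpa [Nat.sub_add_cancel hk, Nat.sub_add_cancel (card_pos.2 ⟨x, hx⟩)] using
        Nat.add_one_mul_choose_eq (#H.core - 1) (k - 1)
    calc hdeg H.edges {x}
        = ∑ S ∈ H.core.powersetCard k with x ∈ S, #(H.leaves S) :=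
          H.hdeg_edges_singleton_of_mem_core hx
      _ ≤ #{S ∈ H.core.powersetCard k | x ∈ S} * (c * #H.core) :=
          sum_le_card_nsmul _ _ _ fun S hS => hleaves S (mem_filter.1 hS).1
      _ = c * (#H.core * (#H.core - 1).choose (k - 1)) := by rw [hthrough]; ring
      _ = c * k * (#H.core).choose k := by rw [hchoose]; ring
  · rw [H.hdeg_edges_singleton_of_notMem_core hx, ← card_powersetCard]
    exact (card_filter_le _ _).trans (Nat.le_mul_of_pos_left _ (Nat.mul_pos hc hk))

theorem card_leaves_le_maxDeg (hS : S ∈ H.core.powersetCard k) :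
    #(H.leaves S) ≤ maxDeg H.edges k :=
  (H.hdeg_edges_of_mem_powersetCard hS).symm.trans_le (hdeg_le_maxDeg S (mem_powersetCard.1 hS).2)

theorem maxDeg_le_mul_card_core (hc : 0 < c)
    (hleaves : ∀ S ∈ H.core.powersetCard k, #(H.leaves S) ≤ c * #H.core) :
    maxDeg H.edges k ≤ c * #H.core := by
  refine maxDeg_le fun T hT => ?_
  by_cases hTcore : T ⊆ H.core
  · have hT' := mem_powersetCard.2 ⟨hTcore, hT⟩
    exact (H.hdeg_edges_of_mem_powersetCard hT').trans_le (hleaves T hT')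
  · exact (H.hdeg_edges_le_card_core hT hTcore).trans (Nat.le_mul_of_pos_left _ hc)

theorem IsRoot.choose_mul_card_core_le_maxDeg_mul_maxDeg (hv : H.IsRoot v) (hk : k ≤ #H.core)
    (hleaves : ∀ S ∈ H.core.powersetCard k, #H.core ≤ #(H.leaves S)) :
    (#H.core).choose k * #H.core ≤ maxDeg H.edges 1 * maxDeg H.edges k := by
  obtain ⟨S, hS⟩ := powersetCard_nonempty.2 hk
  exact Nat.mul_le_mul (hv.choose_le_maxDeg_one hk)
    ((hleaves S hS).trans (card_leaves_le_maxDeg hS))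

theorem maxDeg_mul_maxDeg_le (hk : 0 < k) (hc : 0 < c)
    (hleaves : ∀ S ∈ H.core.powersetCard k, #(H.leaves S) ≤ c * #H.core) :
    maxDeg H.edges 1 * maxDeg H.edges k ≤ c ^ 2 * k * ((#H.core).choose k * #H.core) :=
  (Nat.mul_le_mul (maxDeg_one_le hk hc hleaves) (maxDeg_le_mul_card_core hc hleaves)).trans_eq
    (by ring)

theorem IsRoot.maxDeg_mul_maxDeg_bounds {n : ℕ}
    (hn : n = 1 + #H.core + (#H.core).choose k * #H.core) (hv : H.IsRoot v) (hk : 0 < k)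
    (hkcore : k ≤ #H.core)
    (hleaves : ∀ S ∈ H.core.powersetCard k,
      #H.core ≤ #(H.leaves S) ∧ #(H.leaves S) ≤ #H.core + 2) :
    n ≤ 3 * (maxDeg H.edges 1 * maxDeg H.edges k) ∧
      maxDeg H.edges 1 * maxDeg H.edges k ≤ 9 * k * n := by
  have hlower := hv.choose_mul_card_core_le_maxDeg_mul_maxDeg hkcore fun S hS => (hleaves S hS).1
  have hupper := maxDeg_mul_maxDeg_le (c := 3) hk three_pos fun S hS =>
    (hleaves S hS).2.trans (by omega)
  have hcore : #H.core ≤ (#H.core).choose k * #H.core :=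
    Nat.le_mul_of_pos_left _ (Nat.choose_pos hkcore)
  exact ⟨by omega, hupper.trans (Nat.mul_le_mul_left (9 * k) (by omega))⟩

end MaxDegree

section ProperlyColored

variable {H : Hypertree V k} {c : V → β}

theorem IsRoot.ne_of_properlyColored (hv : H.IsRoot v)
    (h : ProperlyColored H.edges (blockColor c)) (hspan : H.IsSpanning) (hk : 0 < k)
    (hw : w ∉ H.core) (hvw : v ≠ w) : c v ≠ c w := by
  obtain ⟨S, hS, hwS⟩ := hspan w hw
  have hSne : S.Nonempty := card_pos.1 ((mem_powersetCard.1 hS).2.symm ▸ hk)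
  exact h.ne_of_insert_mem hSne (H.notMem_of_mem_leaves hS (hv S hS))
    (H.notMem_of_mem_leaves hS hwS) hvw (H.mem_edges.2 ⟨S, hS, v, hv S hS, rfl⟩)
    (H.mem_edges.2 ⟨S, hS, w, hwS, rfl⟩)

theorem IsRoot.injOn_core_of_properlyColored (hv : H.IsRoot v)
    (h : ProperlyColored H.edges (blockColor c)) (hk : 0 < k) (hkcore : k < #H.core) :
    Set.InjOn c H.core := by
  intro x hx y hy hc
  by_contra hxy
  have hroom : k - 1 ≤ #((H.core.erase x).erase y) := by
    rw [card_erase_of_mem (mem_erase.2 ⟨Ne.symm hxy, hy⟩), card_erase_of_mem hx]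
    omega
  obtain ⟨T, hT, hTcard⟩ := exists_subset_card_eq hroom
  have hTcore : T ⊆ H.core := hT.trans ((erase_subset _ _).trans (erase_subset _ _))
  have hxT : x ∉ T := fun hxT => notMem_erase x H.core (erase_subset _ _ (hT hxT))
  have hyT : y ∉ T := fun hyT => notMem_erase y _ (hT hyT)
  have hvcore := hv.notMem_core hkcore.le
  have hedge : ∀ z ∈ H.core, z ∉ T → insert z (insert v T) ∈ H.edges := by
    intro z hz hzT
    have hS : insert z T ∈ H.core.powersetCard k := mem_powersetCard.2
      ⟨insert_subset hz hTcore, by rw [card_insert_of_notMem hzT, hTcard]; omega⟩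
    exact H.mem_edges.2 ⟨_, hS, v, hv _ hS, insert_comm v z T⟩
  have hnotMem : ∀ z ∈ H.core, z ∉ T → z ∉ insert v T := fun z hz hzT hmem =>
    (mem_insert.1 hmem).elim (fun hzv => hvcore (hzv ▸ hz)) hzT
  exact h.ne_of_insert_mem (insert_nonempty v T) (hnotMem x hx hxT) (hnotMem y hy hyT) hxy
    (hedge x hx hxT) (hedge y hy hyT) hc

theorem IsRoot.card_fiber_le_two [Fintype V] [DecidableEq β] (hv : H.IsRoot v)
    (h : ProperlyColored H.edges (blockColor c)) (hspan : H.IsSpanning) (hk : 0 < k)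
    (hkcore : k < #H.core) : #{x | c x = c v} ≤ 2 := by
  have hsub : ({x | c x = c v} : Finset V) ⊆ insert v {x ∈ H.core | c x = c v} := by
    intro x hx
    have hcx : c x = c v := (mem_filter.1 hx).2
    by_contra hnot
    simp only [mem_insert, mem_filter, hcx, and_true, not_or] at hnot
    exact hv.ne_of_properlyColored h hspan hk hnot.2 (Ne.symm hnot.1) hcx.symm
  have hcore : #{x ∈ H.core | c x = c v} ≤ 1 := card_le_one_iff.2 fun {x y} hx hy =>
    hv.injOn_core_of_properlyColored h hk hkcore (mem_filter.1 hx).1 (mem_filter.1 hy).1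
      ((mem_filter.1 hx).2.trans (mem_filter.1 hy).2.symm)
  exact (card_le_card hsub).trans ((card_insert_le _ _).trans (Nat.succ_le_succ hcore))

end ProperlyColored

theorem not_properlyColored_blockColor_div {n m : ℕ} {H : Hypertree (Fin n) k} {v v' : Fin n}
    (hm : 2 < m) (hv : H.IsRoot v) (hv' : H.IsRoot v') (hvv' : v ≠ v') (hspan : H.IsSpanning)
    (hk : 0 < k) (hkcore : k < #H.core) {f : Fin n → Fin n} (hf : f.Injective) :
    ¬ProperlyColored H.edges fun e => blockColor (fun x : Fin n => x.val / m) (e.image f) := by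
  intro h
  simp only [blockColor_image hf] at h
  have hlast : ∀ ρ, H.IsRoot ρ → (f ρ).val / m = n / m := by
    intro ρ hρ
    have hfiber : #{x | (f x).val / m = (f ρ).val / m} = #{y : Fin n | y.val / m = (f ρ).val / m} :=
      card_bijective f (Finite.injective_iff_bijective.1 hf) fun x => by
        simp only [mem_filter, mem_univ, true_and]
    refine val_div_eq_of_card_filter_lt (f ρ) (hfiber.symm.trans_lt ?_)
    exact (hρ.card_fiber_le_two h hspan hk hkcore).trans_lt hm
  exact hv.ne_of_properlyColored h hspan hk (hv'.notMem_core hkcore.le) hvv'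
    ((hlast v hv).trans (hlast v' hv').symm)

end Hypertree

/-- For every `r ≥ 2` there exist positive constants `c₁, c₂` such that for every
`n₁ ≥ r` and `n = 1 + n₁ + C(n₁, r-1)·n₁` there is an `r`-uniform hypergraph `G` on `n`
vertices with `c₁ n ≤ Δ₁(G)·Δ_{r-1}(G) ≤ c₂ n` (i.e. `Δ₁(G)Δ_{r-1}(G) = Θ(n)`), and a
globally `(r+1)^r`-bounded coloring of `K_n^{(r)}` containing no properly colored copy
of `G`. -/
theorem stmt14 (r : ℕ) (hr : 2 ≤ r) :
    ∃ c₁ c₂ : ℚ, 0 < c₁ ∧ 0 < c₂ ∧ ∀ n₁ : ℕ, r ≤ n₁ → ∀ n : ℕ,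
      n = 1 + n₁ + Nat.choose n₁ (r - 1) * n₁ →
      ∃ G : Finset (Finset (Fin n)),
        (∀ e ∈ G, e.card = r) ∧
        c₁ * n ≤ ((maxDeg G 1 * maxDeg G (r - 1) : ℕ) : ℚ) ∧
        ((maxDeg G 1 * maxDeg G (r - 1) : ℕ) : ℚ) ≤ c₂ * n ∧
        ∃ col : Finset (Fin n) → ℕ,
          (∀ k : ℕ, (((Finset.univ : Finset (Fin n)).powersetCard r).filter
              (fun e => col e = k)).card ≤ (r + 1) ^ r) ∧
          ¬ ∃ f : Fin n → Fin n, Function.Injective f ∧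
            ∀ e₁ ∈ G, ∀ e₂ ∈ G, e₁ ≠ e₂ → (e₁ ∩ e₂).Nonempty →
              col (e₁.image f) ≠ col (e₂.image f) := by
  obtain ⟨k, rfl⟩ : ∃ k, r = k + 1 := ⟨r - 1, by omega⟩
  have hk : 0 < k := by omega
  refine ⟨1 / 3, 9 * k, by norm_num, by positivity, fun N hN n hn => ?_⟩
  rw [Nat.add_sub_cancel] at hn ⊢
  obtain ⟨H, v, v', rfl, hspan, hv, hv', hvv', hleaves⟩ :=
    Hypertree.exists_isSpanning_two_roots (V := Fin n) (k := k) (N := N) (by omega) (by omega)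
      ((Fintype.card_fin n).trans hn)
  obtain ⟨hlower, hupper⟩ := hv.maxDeg_mul_maxDeg_bounds hn hk (by omega) hleaves
  let b : Fin n → ℕ := fun x => x.val / (k + 1 + 1)
  refine ⟨H.edges, fun e he => H.card_of_mem_edges he, ?_, mod_cast hupper,
    fun e => Encodable.encode (blockColor b e), fun c => ?_, ?_⟩
  · linarith [show (n : ℚ) ≤ 3 * (maxDeg H.edges 1 * maxDeg H.edges k : ℕ) from mod_cast hlower]
  · exact card_filter_comp_blockColor_eq_le Encodable.encode_injective
      (card_filter_val_div_eq_le (Nat.succ_pos _)) _ c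
  · rintro ⟨f, hf, hproper⟩
    exact Hypertree.not_properlyColored_blockColor_div (by omega) hv hv' hvv' hspan hk hN hf
      fun e₁ he₁ e₂ he₂ hne hmeet heq => hproper e₁ he₁ e₂ he₂ hne hmeet (congrArg _ heq)
end

section
/- Let m ≥ 2, let q ≥ m be a prime power, and let n ≥ 3q². There exists an m-partite graph G, with at most 3q² vertices in each part and maximum degree at most q + 2m, and a globally ⌈n/(q²+q)⌉-bounded edge-coloring of the complete m-partite graph K_{m⊗n} that contains no properly colored copy of G. -/
/-!
The graph `G` is the incidence graph of a projective plane of order `q` with cliques of order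
`m - 1` attached to consecutive points and to consecutive lines. In a copy of `G` in `K_{m⊗n}` such
a clique leaves a single part for the vertices it is joined to, so all points lie in one part and
all lines in another. An edge of `K_{m⊗n}` is coloured by its endpoint in the lower part together
with the part of the other endpoint and its index modulo `q ^ 2 + q`. Of the `q ^ 2 + q + 1` points
or lines embedded in the higher part, two agree in that residue, so they send edges of the same
colour to the line or point incident to both.
-/

open Configuration Function
open scoped LinearAlgebra.Projectivization

section Counting

theorem ncard_le_add_ncard_preimage {α β : Type*} (s : Set (α ⊕ β)) :
    s.ncard ≤ (Sum.inl ⁻¹' s).ncard + (Sum.inr ⁻¹' s).ncard :=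
  calc s.ncard = (Sum.inl '' (Sum.inl ⁻¹' s) ∪ Sum.inr '' (Sum.inr ⁻¹' s)).ncard := by
        rw [Set.image_preimage_inl_union_image_preimage_inr]
    _ ≤ _ := Set.ncard_union_le _ _
    _ = _ := by
        rw [Set.ncard_image_of_injective _ Sum.inl_injective,
          Set.ncard_image_of_injective _ Sum.inr_injective]

theorem card_filter_ne_le_two_mul_card_filter_lt {α β : Type*} [Fintype α] [LinearOrder β]
    (g : α → β) (r : α → α → Prop) [DecidableRel r] (hr : ∀ a b, r a b → r b a) :
    (Finset.univ.filter fun e : α × α => g e.1 ≠ g e.2 ∧ r e.1 e.2).card ≤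
      2 * (Finset.univ.filter fun e : α × α => g e.1 < g e.2 ∧ r e.1 e.2).card := by
  classical
  set s := Finset.univ.filter fun e : α × α => g e.1 < g e.2 ∧ r e.1 e.2
  have hsub : (Finset.univ.filter fun e : α × α => g e.1 ≠ g e.2 ∧ r e.1 e.2) ⊆
      s ∪ s.image Prod.swap := by
    rintro ⟨a, b⟩ hab
    obtain ⟨hne, hrab⟩ := (Finset.mem_filter.1 hab).2
    rcases hne.lt_or_gt with hlt | hgt
    · exact Finset.mem_union_left _ (by simp [s, hlt, hrab])
    · exact Finset.mem_union_right _
        (Finset.mem_image.2 ⟨(b, a), by simp [s, hgt, hr a b hrab], rfl⟩)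
  calc _ ≤ (s ∪ s.image Prod.swap).card := Finset.card_le_card hsub
    _ ≤ s.card + (s.image Prod.swap).card := Finset.card_union_le _ _
    _ ≤ 2 * s.card := by have := s.card_image_le (f := Prod.swap); omega

end Counting

section ProjectivePlane

theorem order_projectivization (K : Type*) [Field K] [Finite K] [DecidableEq K] :
    ProjectivePlane.order (ℙ K (Fin 3 → K)) (ℙ K (Fin 3 → K)) = Nat.card K := by
  have := Fintype.ofFinite (ℙ K (Fin 3 → K))
  have hcard := Projectivization.card_of_finrank K (Fin 3 → K) (n := 3) (by simp)
  rw [Nat.card_eq_fintype_card,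
    ProjectivePlane.card_points (ℙ K (Fin 3 → K)) (ℙ K (Fin 3 → K))] at hcard
  simp only [Finset.sum_range_succ, Finset.sum_range_zero] at hcard
  nlinarith

theorem exists_projectivePlane_order_eq {q : ℕ} (hq : IsPrimePow q) :
    ∃ (P L : Type) (_ : Membership P L) (_ : Finite P) (_ : Finite L)
      (_ : ProjectivePlane P L), ProjectivePlane.order P L = q := by
  classical
  obtain ⟨p, k, hp, hk, rfl⟩ := hq
  have : Fact p.Prime := ⟨hp.nat_prime⟩
  let K := GaloisField p k
  exact ⟨ℙ K (Fin 3 → K), ℙ K (Fin 3 → K), inferInstance, inferInstance, inferInstance,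
    inferInstance, (order_projectivization K).trans (GaloisField.card p k hk.ne')⟩

end ProjectivePlane

section IncidenceGraph

/-- The incidence (Levi) graph of a configuration: `p` and `l` are adjacent iff `p ∈ l`. -/
def incidenceGraph (P L : Type*) [Membership P L] : SimpleGraph (P ⊕ L) where
  Adj
    | .inl p, .inr l => p ∈ l
    | .inr l, .inl p => p ∈ l
    | _, _ => False
  symm := ⟨by rintro (p | l) (p' | l') h <;> exact h⟩
  loopless := ⟨by rintro (p | l) h <;> exact h⟩

variable {P L : Type*} [Membership P L]

/-- The proper colouring of the incidence graph with colour `a` on points and `b` on lines. -/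
def incidenceColoring {γ : Type*} {a b : γ} (hab : a ≠ b) : (incidenceGraph P L).Coloring γ :=
  .mk (Sum.elim (fun _ => a) (fun _ => b)) <| by
    rintro (p | l) (p' | l') h
    exacts [h.elim, hab, hab.symm, h.elim]

theorem ncard_neighborSet_incidenceGraph_le [ProjectivePlane P L] [Finite P] [Finite L]
    (v : P ⊕ L) :
    ((incidenceGraph P L).neighborSet v).ncard ≤ ProjectivePlane.order P L + 1 := by
  rcases v with p | l
  · calc _ ≤ (∅ : Set P).ncard + {l : L | p ∈ l}.ncard :=
        ncard_le_add_ncard_preimage ((incidenceGraph P L).neighborSet (.inl p))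
      _ = lineCount L p := by rw [Set.ncard_empty, zero_add]; rfl
      _ ≤ _ := (ProjectivePlane.lineCount_eq L p).le
  · calc _ ≤ {p : P | p ∈ l}.ncard + (∅ : Set L).ncard :=
        ncard_le_add_ncard_preimage ((incidenceGraph P L).neighborSet (.inr l))
      _ = pointCount P l := by rw [Set.ncard_empty, add_zero]; rfl
      _ ≤ _ := (ProjectivePlane.pointCount_eq P l).le

end IncidenceGraph

section AttachCliques

variable {V J : Type*}

/-- The graph obtained from `H` by adding, for each `j : J`, a new clique with vertex set `{j} × κ`
and joining all of it to all of `A j`. -/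
def attachCliques (H : SimpleGraph V) (A : J → Set V) (κ : Type*) :
    SimpleGraph (V ⊕ J × κ) where
  Adj
    | .inl u, .inl v => H.Adj u v
    | .inl v, .inr x => v ∈ A x.1
    | .inr x, .inl v => v ∈ A x.1
    | .inr x, .inr y => x.1 = y.1 ∧ x.2 ≠ y.2
  symm := ⟨by
    rintro (u | x) (v | y) h
    exacts [h.symm, h, h, ⟨h.1.symm, h.2.symm⟩]⟩
  loopless := ⟨by
    rintro (v | x) h
    exacts [h.ne rfl, h.2 rfl]⟩

variable {H : SimpleGraph V} {A : J → Set V}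

theorem ncard_neighborSet_attachCliques_inl_le {κ : Type*} (v : V) :
    ((attachCliques H A κ).neighborSet (.inl v)).ncard ≤
      (H.neighborSet v).ncard + {j | v ∈ A j}.ncard * Nat.card κ :=
  calc _ ≤ (H.neighborSet v).ncard + {x : J × κ | v ∈ A x.1}.ncard :=
        ncard_le_add_ncard_preimage ((attachCliques H A κ).neighborSet (.inl v))
    _ = (H.neighborSet v).ncard + ({j | v ∈ A j} ×ˢ (Set.univ : Set κ)).ncard := by
        congr 2; ext; simp
    _ = _ := by rw [Set.ncard_prod, Set.ncard_univ]

theorem ncard_neighborSet_attachCliques_inr_le {κ : Type*} [Finite κ] (x : J × κ) :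
    ((attachCliques H A κ).neighborSet (.inr x)).ncard ≤ (A x.1).ncard + Nat.card κ :=
  calc _ ≤ (A x.1).ncard + {y : J × κ | x.1 = y.1 ∧ x.2 ≠ y.2}.ncard :=
        ncard_le_add_ncard_preimage ((attachCliques H A κ).neighborSet (.inr x))
    _ ≤ (A x.1).ncard + (Set.univ : Set κ).ncard := by
        gcongr
        refine Set.ncard_le_ncard_of_injOn Prod.snd (fun _ _ => trivial) ?_
        exact fun y hy z hz hyz => Prod.ext (hy.1.symm.trans hz.1) hyz
    _ = _ := by rw [Set.ncard_univ]

theorem attachCliques_coloring_eq_of_mem {κ γ : Type*} [Finite κ] [Finite γ]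
    (C : (attachCliques H A κ).Coloring γ) (hγ : Nat.card γ ≤ Nat.card κ + 1) {j : J} {v w : V}
    (hv : v ∈ A j) (hw : w ∈ A j) : C (.inl v) = C (.inl w) := by
  let cliqueColor : Option κ → γ := fun o => o.elim (C (.inl v)) fun s => C (.inr (j, s))
  have hinj : Injective cliqueColor := by
    rintro (_ | s) (_ | t) h
    · rfl
    · exact (C.valid (v := .inl v) (w := .inr (j, t)) hv h).elim
    · exact (C.valid (v := .inr (j, s)) (w := .inl v) hv h).elim
    · by_contra hst
      exact C.valid (v := .inr (j, s)) (w := .inr (j, t)) ⟨rfl, fun h => hst (congrArg _ h)⟩ h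
  obtain ⟨_ | s, hs⟩ :=
    (hinj.bijective_of_nat_card_le (by simpa [Finite.card_option] using hγ)).surjective (C (.inl w))
  · exact hs
  · exact (C.valid (v := .inr (j, s)) (w := .inl w) hw hs).elim

/-- Extends a colouring of `H` that has constant colour `c j` on each `A j` by giving the `j`-th
clique the colours other than `c j`. -/
def attachCliquesColoring {r : ℕ} (C : H.Coloring (Fin (r + 1))) (c : J → Fin (r + 1))
    (hc : ∀ j, ∀ v ∈ A j, C v = c j) : (attachCliques H A (Fin r)).Coloring (Fin (r + 1)) :=
  .mk (Sum.elim C fun x => (c x.1).succAbove x.2) <| by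
    rintro (u | ⟨j, s⟩) (v | ⟨k, t⟩) h
    · exact C.valid h
    · exact fun heq => Fin.succAbove_ne _ _ (heq.symm.trans (hc k u h))
    · exact fun heq => Fin.succAbove_ne _ _ (heq.trans (hc j v h))
    · obtain ⟨rfl, hst⟩ := h
      exact fun heq => hst (Fin.succAbove_right_injective heq)

theorem ncard_attachCliquesColoring_preimage_le [Finite J] {r : ℕ} (C : H.Coloring (Fin (r + 1)))
    (c : J → Fin (r + 1)) (hc : ∀ j, ∀ v ∈ A j, C v = c j) (a : Fin (r + 1)) :
    (attachCliquesColoring C c hc ⁻¹' {a}).ncard ≤ (C ⁻¹' {a}).ncard + {j | c j ≠ a}.ncard :=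
  calc _ ≤ (C ⁻¹' {a}).ncard + {x : J × Fin r | (c x.1).succAbove x.2 = a}.ncard :=
        ncard_le_add_ncard_preimage (attachCliquesColoring C c hc ⁻¹' {a})
    _ ≤ _ := by
        gcongr
        refine Set.ncard_le_ncard_of_injOn Prod.fst
          (fun x hx heq => Fin.succAbove_ne _ _ (hx.trans heq.symm)) ?_
        rintro ⟨j, s⟩ hs ⟨k, t⟩ ht (rfl : j = k)
        exact congrArg _ (Fin.succAbove_right_injective (hs.trans ht.symm))

end AttachCliques

section ConsecutiveTriples

variable {α : Type*} {N : ℕ} (e : α ≃ Fin N)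

/-- The `j`-th set `{2j, 2j + 1, 2j + 2}` (cut off at `N`) in the enumeration `e`. Consecutive sets
overlap in one element. -/
def consecutiveTriple (j : Fin (N / 2)) : Set α :=
  {a | (e a : ℕ) ∈ Set.Icc (2 * j : ℕ) (2 * j + 2)}

theorem ncard_consecutiveTriple_le (j : Fin (N / 2)) : (consecutiveTriple e j).ncard ≤ 3 :=
  calc _ ≤ (Set.Icc (2 * j : ℕ) (2 * j + 2)).ncard :=
        Set.ncard_le_ncard_of_injOn (fun a => (e a : ℕ)) (fun _ ha => ha)
          (Fin.val_injective.comp e.injective).injOn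
    _ = 3 := by rw [← Finset.coe_Icc, Set.ncard_coe_finset, Nat.card_Icc]; omega

theorem ncard_setOf_mem_consecutiveTriple_le (a : α) :
    {j | a ∈ consecutiveTriple e j}.ncard ≤ 2 :=
  calc _ ≤ ({(e a : ℕ) / 2, (e a : ℕ) / 2 - 1} : Set ℕ).ncard := by
        refine Set.ncard_le_ncard_of_injOn Fin.val (fun j hj => ?_) Fin.val_injective.injOn
        obtain ⟨hle, hge⟩ := hj
        simp only [Set.mem_insert_iff, Set.mem_singleton_iff]
        omega
    _ ≤ 2 := (Set.ncard_insert_le _ _).trans (by rw [Set.ncard_singleton])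

theorem eq_of_forall_consecutiveTriple_eq {β : Type*} {g : α → β}
    (hg : ∀ j, ∀ a ∈ consecutiveTriple e j, ∀ b ∈ consecutiveTriple e j, g a = g b) (a b : α) :
    g a = g b := by
  have eq_zero (t : ℕ) (ht : t < N) :
      g (e.symm ⟨t, ht⟩) = g (e.symm ⟨0, t.zero_le.trans_lt ht⟩) := by
    induction t with
    | zero => rfl
    | succ t ih =>
      rw [← ih (by omega)]
      apply hg ⟨t / 2, by omega⟩ <;>
        simp only [consecutiveTriple, Set.mem_ofPred_eq, Equiv.apply_symm_apply, Set.mem_Icc] <;>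
        omega
  simpa using (eq_zero (e a) (e a).2).trans (eq_zero (e b) (e b).2).symm

end ConsecutiveTriples

section LinkedIncidenceGraph

variable {P L : Type*} {N : ℕ} (eP : P ≃ Fin N) (eL : L ≃ Fin N)

/-- The consecutive triples of points, followed by the consecutive triples of lines. -/
def linkingTriple : Fin (N / 2) ⊕ Fin (N / 2) → Set (P ⊕ L) :=
  Sum.elim (fun j => Sum.inl '' consecutiveTriple eP j) fun j => Sum.inr '' consecutiveTriple eL j

theorem ncard_linkingTriple_le (j : Fin (N / 2) ⊕ Fin (N / 2)) :
    (linkingTriple eP eL j).ncard ≤ 3 := by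
  rcases j with j | j
  · exact (Set.ncard_image_of_injective _ Sum.inl_injective).trans_le
      (ncard_consecutiveTriple_le eP j)
  · exact (Set.ncard_image_of_injective _ Sum.inr_injective).trans_le
      (ncard_consecutiveTriple_le eL j)

theorem ncard_setOf_mem_linkingTriple_le (v : P ⊕ L) :
    {j | v ∈ linkingTriple eP eL j}.ncard ≤ 2 := by
  refine (ncard_le_add_ncard_preimage _).trans ?_
  rcases v with p | l
  · simpa [linkingTriple] using ncard_setOf_mem_consecutiveTriple_le eP p
  · simpa [linkingTriple] using ncard_setOf_mem_consecutiveTriple_le eL l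

variable [Membership P L]

/-- The graph `G` of the theorem, with cliques of order `r` attached to consecutive points and to
consecutive lines. Each clique is joined to three consecutive vertices instead of two because
`q ^ 2 + q` cliques on either side would give parts with `2 * q ^ 2 + 2 * q + 1` vertices, which
exceeds `3 * q ^ 2` for `q = 2`. -/
def linkedIncidenceGraph (r : ℕ) :
    SimpleGraph ((P ⊕ L) ⊕ (Fin (N / 2) ⊕ Fin (N / 2)) × Fin r) :=
  attachCliques (incidenceGraph P L) (linkingTriple eP eL) (Fin r)

/-- The partition of `linkedIncidenceGraph eP eL (r + 1)` into `r + 2` parts, with the points in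
part `0` and the lines in part `1`. -/
def linkedIncidenceColoring (r : ℕ) :
    (linkedIncidenceGraph eP eL (r + 1)).Coloring (Fin (r + 2)) :=
  attachCliquesColoring (incidenceColoring zero_ne_one) (Sum.elim (fun _ => 0) fun _ => 1) <| by
    rintro (j | j) _ ⟨_, -, rfl⟩ <;> rfl

theorem ncard_linkedIncidenceColoring_preimage_le (r : ℕ) (a : Fin (r + 2)) :
    (linkedIncidenceColoring eP eL r ⁻¹' {a}).ncard ≤ N + N / 2 := by
  have hP : Nat.card P = N := by simp [Nat.card_congr eP]
  have hL : Nat.card L = N := by simp [Nat.card_congr eL]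
  have hvertices : (Sum.elim (fun _ : P => 0) (fun _ : L => 1) ⁻¹' {a}).ncard ≤
      {_p : P | 0 = a}.ncard + {_l : L | 1 = a}.ncard := ncard_le_add_ncard_preimage _
  have hcliques : {j : Fin (N / 2) ⊕ Fin (N / 2) | Sum.elim (fun _ => 0) (fun _ => 1) j ≠ a}.ncard ≤
      {_j : Fin (N / 2) | 0 ≠ a}.ncard + {_j : Fin (N / 2) | 1 ≠ a}.ncard :=
    ncard_le_add_ncard_preimage _
  refine (ncard_attachCliquesColoring_preimage_le _ _ _ a).trans <|
    (Nat.add_le_add hvertices hcliques).trans ?_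
  rcases eq_or_ne 0 a with rfl | h0
  · simp [hP]
  rcases eq_or_ne 1 a with rfl | h1
  · simp [hL]
  simpa [h0, h1] using Nat.div_le_self N 2

theorem ncard_neighborSet_linkedIncidenceGraph_le [ProjectivePlane P L] (r : ℕ)
    (v : (P ⊕ L) ⊕ (Fin (N / 2) ⊕ Fin (N / 2)) × Fin r) :
    ((linkedIncidenceGraph eP eL r).neighborSet v).ncard ≤
      ProjectivePlane.order P L + 2 * (r + 1) := by
  have := Finite.of_equiv _ eP.symm
  have := Finite.of_equiv _ eL.symm
  rcases v with v | x
  · calc _ ≤ _ := ncard_neighborSet_attachCliques_inl_le v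
      _ ≤ (ProjectivePlane.order P L + 1) + 2 * Nat.card (Fin r) := by
          gcongr
          · exact ncard_neighborSet_incidenceGraph_le v
          · exact ncard_setOf_mem_linkingTriple_le eP eL v
      _ ≤ _ := by rw [Nat.card_fin]; omega
  · calc _ ≤ _ := ncard_neighborSet_attachCliques_inr_le x
      _ ≤ 3 + Nat.card (Fin r) := by gcongr; exact ncard_linkingTriple_le eP eL x.1
      _ ≤ _ := by
          have := ProjectivePlane.one_lt_order P L
          rw [Nat.card_fin]; omega

theorem linkedIncidenceGraph_coloring_inl_eq {r : ℕ}
    (C : (linkedIncidenceGraph eP eL r).Coloring (Fin (r + 1))) (p p' : P) :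
    C (.inl (.inl p)) = C (.inl (.inl p')) :=
  eq_of_forall_consecutiveTriple_eq eP (g := fun p => C (.inl (.inl p)))
    (fun j _ ha _ hb => attachCliques_coloring_eq_of_mem (j := .inl j) C (by simp)
      (Set.mem_image_of_mem _ ha) (Set.mem_image_of_mem _ hb)) p p'

theorem linkedIncidenceGraph_coloring_inr_eq {r : ℕ}
    (C : (linkedIncidenceGraph eP eL r).Coloring (Fin (r + 1))) (l l' : L) :
    C (.inl (.inr l)) = C (.inl (.inr l')) :=
  eq_of_forall_consecutiveTriple_eq eL (g := fun l => C (.inl (.inr l)))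
    (fun j _ ha _ hb => attachCliques_coloring_eq_of_mem (j := .inr j) C (by simp)
      (Set.mem_image_of_mem _ ha) (Set.mem_image_of_mem _ hb)) l l'

end LinkedIncidenceGraph

section ResidueColor

variable {ι : Type*} [LinearOrder ι] [Encodable ι] {n M : ℕ}

/-- The edge colouring of the complete multipartite graph on `ι × Fin n` in which the colour of an
edge records its endpoint in the lower part, together with the part of the other endpoint and the
residue modulo `M` of its index. Pairs within a part, which are not edges, get a junk value. -/
def residueColor (M : ℕ) (v w : ι × Fin n) : ℕ :=
  if v.1 < w.1 then Encodable.encode (v, w.1, (w.2 : ℕ) % M)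
  else if w.1 < v.1 then Encodable.encode (w, v.1, (v.2 : ℕ) % M)
  else 0

theorem residueColor_of_lt {v w : ι × Fin n} (h : v.1 < w.1) :
    residueColor M v w = Encodable.encode (v, w.1, (w.2 : ℕ) % M) :=
  if_pos h

theorem residueColor_comm (v w : ι × Fin n) : residueColor M v w = residueColor M w v := by
  unfold residueColor
  split_ifs with hvw hwv
  · exact absurd hvw hwv.not_gt
  all_goals rfl

theorem card_filter_lt_residueColor_eq_le [Fintype ι] (hM : 0 < M) (col : ℕ) :
    (Finset.univ.filter fun e : (ι × Fin n) × (ι × Fin n) =>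
      e.1.1 < e.2.1 ∧ residueColor M e.1 e.2 = col).card ≤ n ⌈/⌉ M := by
  refine (Finset.card_le_card_of_injOn (fun e => (e.2.2 : ℕ) / M) ?_ ?_).trans_eq
    (Finset.card_range _)
  · intro e _
    simpa using Nat.div_lt_of_lt_mul (e.2.2.2.trans_le (le_smul_ceilDiv hM))
  · rintro ⟨v, w⟩ h ⟨v', w'⟩ h' (hdiv : (w.2 : ℕ) / M = w'.2 / M)
    obtain ⟨hlt, hcol⟩ := (Finset.mem_filter.1 h).2
    obtain ⟨hlt', hcol'⟩ := (Finset.mem_filter.1 h').2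
    rw [residueColor_of_lt hlt] at hcol
    rw [residueColor_of_lt hlt', ← hcol] at hcol'
    obtain ⟨rfl, hpart, hmod⟩ : v' = v ∧ w'.1 = w.1 ∧ (w'.2 : ℕ) % M = w.2 % M := by
      simpa only [Prod.mk.injEq] using Encodable.encode_injective hcol'
    have hindex : w.2 = w'.2 := Fin.ext (Nat.ext_div_mod hdiv hmod.symm)
    rw [Prod.ext hpart.symm hindex]

theorem card_filter_residueColor_eq_le [Fintype ι] (hM : 0 < M) (col : ℕ) :
    (Finset.univ.filter fun e : (ι × Fin n) × (ι × Fin n) =>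
      e.1.1 ≠ e.2.1 ∧ residueColor M e.1 e.2 = col).card ≤ 2 * (n ⌈/⌉ M) :=
  (card_filter_ne_le_two_mul_card_filter_lt Prod.fst (fun v w => residueColor M v w = col)
    fun v w h => (residueColor_comm w v).trans h).trans
    (Nat.mul_le_mul_left 2 (card_filter_lt_residueColor_eq_le hM col))

theorem exists_ne_forall_residueColor_eq {α : Type*} [Fintype α] (hM : 0 < M)
    (hα : M < Fintype.card α) {g : α → ι × Fin n} {i : ι} (hg : ∀ a, (g a).1 = i) :
    ∃ a b, a ≠ b ∧ ∀ v, v.1 < i → residueColor M v (g a) = residueColor M v (g b) := by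
  obtain ⟨a, b, hab, hmod⟩ := Fintype.exists_ne_map_eq_of_card_lt
    (fun a => (⟨(g a).2 % M, Nat.mod_lt _ hM⟩ : Fin M)) (by simpa using hα)
  refine ⟨a, b, hab, fun v hv => ?_⟩
  rw [residueColor_of_lt (by rwa [hg]), residueColor_of_lt (by rwa [hg]), hg, hg,
    Fin.mk.inj_iff.1 hmod]

theorem exists_incident_residueColor_eq {P L : Type*} [Membership P L] [HasPoints P L]
    [HasLines P L] [Fintype P] [Fintype L] (hM : 0 < M) (hP : M < Fintype.card P)
    (hL : M < Fintype.card L) {f : P ⊕ L → ι × Fin n} {i j : ι} (hij : i ≠ j)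
    (hfP : ∀ p, (f (.inl p)).1 = i) (hfL : ∀ l, (f (.inr l)).1 = j) :
    ∃ u v w, (incidenceGraph P L).Adj u v ∧ (incidenceGraph P L).Adj v w ∧ u ≠ w ∧
      residueColor M (f u) (f v) = residueColor M (f v) (f w) := by
  rcases hij.lt_or_gt with hlt | hgt
  · obtain ⟨l, l', hne, heq⟩ := exists_ne_forall_residueColor_eq hM hL hfL
    obtain ⟨hp, hp'⟩ := HasPoints.mkPoint_ax (P := P) hne
    exact ⟨.inr l, .inl (HasPoints.mkPoint hne), .inr l', hp, hp', Sum.inr_injective.ne hne,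
      (residueColor_comm _ _).trans (heq _ (by rwa [hfP]))⟩
  · obtain ⟨p, p', hne, heq⟩ := exists_ne_forall_residueColor_eq hM hP hfP
    obtain ⟨hl, hl'⟩ := HasLines.mkLine_ax (L := L) hne
    exact ⟨.inl p, .inr (HasLines.mkLine hne), .inl p', hl, hl', Sum.inl_injective.ne hne,
      (residueColor_comm _ _).trans (heq _ (by rwa [hfL]))⟩

end ResidueColor

theorem stmt15_general.{u, v} {P : Type u} {L : Type v} [Membership P L] [Finite P] [Finite L]
    [ProjectivePlane P L] (m q n : ℕ) (hm : 2 ≤ m) (hq : ProjectivePlane.order P L = q) :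
    ∃ (W : Type (max u v)) (_ : Fintype W) (G : SimpleGraph W) (p : W → Fin m),
      (∀ u v, G.Adj u v → p u ≠ p v) ∧
      (∀ i : Fin m, (p ⁻¹' {i}).ncard ≤ 3 * q ^ 2) ∧
      (∀ v, (G.neighborSet v).ncard ≤ q + 2 * m) ∧
      ∃ c : (Fin m × Fin n) → (Fin m × Fin n) → ℕ,
        (∀ v w, c v w = c w v) ∧
        (∀ col : ℕ, (Finset.univ.filter (fun e : (Fin m × Fin n) × (Fin m × Fin n) =>
            e.1.1 ≠ e.2.1 ∧ c e.1 e.2 = col)).card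
          ≤ 2 * ((n + (q ^ 2 + q) - 1) / (q ^ 2 + q))) ∧
        ¬ ∃ f : W → Fin m × Fin n, Function.Injective f ∧
            (∀ u v, G.Adj u v → (f u).1 ≠ (f v).1) ∧
            (∀ u v w, G.Adj u v → G.Adj v w → u ≠ w →
              c (f u) (f v) ≠ c (f v) (f w)) := by
  have := Fintype.ofFinite P
  have := Fintype.ofFinite L
  obtain ⟨r, rfl⟩ := Nat.exists_eq_add_of_le' hm
  have hq2 : 2 ≤ q := hq ▸ ProjectivePlane.one_lt_order P L
  have hP : Fintype.card P = q ^ 2 + q + 1 := hq ▸ ProjectivePlane.card_points P L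
  have hL : Fintype.card L = q ^ 2 + q + 1 := hq ▸ ProjectivePlane.card_lines P L
  let eP := Fintype.equivFinOfCardEq hP
  let eL := Fintype.equivFinOfCardEq hL
  refine ⟨_, inferInstance, linkedIncidenceGraph eP eL (r + 1), linkedIncidenceColoring eP eL r,
    fun _ _ => (linkedIncidenceColoring eP eL r).valid, fun a => ?_, fun v => ?_,
    residueColor (q ^ 2 + q), residueColor_comm,
    card_filter_residueColor_eq_le (by omega), ?_⟩
  · have := ncard_linkedIncidenceColoring_preimage_le eP eL r a
    have : q * 2 ≤ q ^ 2 := by nlinarith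
    omega
  · exact hq ▸ ncard_neighborSet_linkedIncidenceGraph_le eP eL (r + 1) v
  · rintro ⟨f, -, hf, hproper⟩
    let C : (linkedIncidenceGraph eP eL (r + 1)).Coloring (Fin (r + 2)) :=
      .mk (fun v => (f v).1) (hf _ _)
    obtain ⟨-, p, -, -, l, -, -, -, -, hpl, -⟩ := @ProjectivePlane.exists_config P L _ _
    obtain ⟨u, v, w, huv, hvw, huw, heq⟩ :=
      exists_incident_residueColor_eq (f := fun x => f (.inl x)) (M := q ^ 2 + q) (by omega)
        (by omega) (by omega) (hf (.inl (.inl p)) (.inl (.inr l)) hpl)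
        (linkedIncidenceGraph_coloring_inl_eq eP eL C · p)
        (linkedIncidenceGraph_coloring_inr_eq eP eL C · l)
    exact hproper (.inl u) (.inl v) (.inl w) huv hvw (Sum.inl_injective.ne huw) heq

/-- For `m ≥ 2`, `q ≥ m` a prime power, and `n ≥ 3q²`, there exist an `m`-partite graph
`G` (a finite graph with a proper partition `p` into `m` parts, each of size at most
`3q²`) of maximum degree at most `q + 2m`, and a globally `⌈n/(q²+q)⌉`-bounded symmetric
edge-coloring `c` of the complete `m`-partite graph `K_{m⊗n}` (on `Fin m × Fin n`, edges
between distinct parts; the global bound is stated for ordered pairs, whence the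
factor 2), such that `K_{m⊗n}` contains no properly colored copy of `G`. -/
theorem stmt15 (m q n : ℕ) (hm : 2 ≤ m) (hq : IsPrimePow q) (hqm : m ≤ q)
    (hn : 3 * q ^ 2 ≤ n) :
    ∃ (W : Type) (_ : Fintype W) (G : SimpleGraph W) (p : W → Fin m),
      (∀ u v, G.Adj u v → p u ≠ p v) ∧
      (∀ i : Fin m, (p ⁻¹' {i}).ncard ≤ 3 * q ^ 2) ∧
      (∀ v, (G.neighborSet v).ncard ≤ q + 2 * m) ∧
      ∃ c : (Fin m × Fin n) → (Fin m × Fin n) → ℕ,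
        (∀ v w, c v w = c w v) ∧
        (∀ col : ℕ, (Finset.univ.filter (fun e : (Fin m × Fin n) × (Fin m × Fin n) =>
            e.1.1 ≠ e.2.1 ∧ c e.1 e.2 = col)).card
          ≤ 2 * ((n + (q ^ 2 + q) - 1) / (q ^ 2 + q))) ∧
        ¬ ∃ f : W → Fin m × Fin n, Function.Injective f ∧
            (∀ u v, G.Adj u v → (f u).1 ≠ (f v).1) ∧
            (∀ u v w, G.Adj u v → G.Adj v w → u ≠ w →
              c (f u) (f v) ≠ c (f v) (f w)) := by
  obtain ⟨P, L, _, _, _, _, hPL⟩ := exists_projectivePlane_order_eq hq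
  exact stmt15_general (P := P) (L := L) m q n hm hPL
end

section
/- Suppose c is a globally (n/(110Δ²))-bounded edge-coloring of the complete m-partite graph K_{m⊗n}, and G is an m-partite graph with parts U₁, …, U_m of sizes at most n and maximum degree Δ. Then K_{m⊗n} contains a rainbow copy of G; moreover the copy can be chosen so that U_i is mapped into the i-th part of K_{m⊗n} for every i. -/
/-!
Choose a part-preserving injection `f` uniformly at random; by the lopsided local lemma, with
positive probability no two edges of `G` receive the same colour.

Colour an edge of the lift of `G` to the pairs `(w, v)`, with `w` and `v` in the same part, by the
colour of its image under `(w, v) ↦ v`. Two edges of `G` get the same colour only if the graph of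
`f` contains a bad set, the union of two distinct edges of the lift of the same colour, which
consists of three or four pairs. Exchanging two images of `f` shows that each pair of a bad set `A`
is used with probability at most `1 / (n - 3)`, conditionally on the other pairs of `A` and on the
avoidance of any family of bad sets in which no pair clashes with a pair in `A`, that is, agrees
with it in exactly one coordinate. A given pair lies in at most `2 n Δ² k` bad sets of size three
and `n² Δ² k` bad sets of size four, where `k` bounds the size of the colour classes, and at most
`8 n` pairs clash with `A`. Since `110 Δ² k ≤ n`, the weights `(n - 3)⁻¹ ^ #A` satisfy the condition
of the local lemma.
-/

open Finset Function MeasureTheory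

section LocalLemma

variable {Ω κ : Type*} [MeasurableSpace Ω] {μ : Measure Ω} [IsFiniteMeasure μ]
  {E : κ → Set Ω} {Γ : κ → Finset κ} {p : κ → ℝ} {t S : Finset κ}

theorem measureReal_avoid_sdiff_le [DecidableEq κ] (S T : Finset κ) :
    μ.real (⋂ j ∈ S \ T, (E j)ᶜ) ≤
      μ.real (⋂ j ∈ S, (E j)ᶜ) + ∑ j ∈ S ∩ T, μ.real (E j ∩ ⋂ l ∈ S \ T, (E l)ᶜ) := by
  have hcover : (⋂ j ∈ S \ T, (E j)ᶜ) ⊆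
      (⋂ j ∈ S, (E j)ᶜ) ∪ ⋃ j ∈ S ∩ T, E j ∩ ⋂ l ∈ S \ T, (E l)ᶜ := by
    intro ω hω
    by_cases hbad : ∃ j ∈ S, ω ∈ E j
    · obtain ⟨j, hj, hωj⟩ := hbad
      have hjT : j ∈ T := by
        by_contra hjT
        exact Set.mem_iInter₂.1 hω j (mem_sdiff.2 ⟨hj, hjT⟩) hωj
      exact Or.inr (Set.mem_iUnion₂.2 ⟨j, mem_inter.2 ⟨hj, hjT⟩, hωj, hω⟩)
    · exact Or.inl (Set.mem_iInter₂.2 fun j hj hωj => hbad ⟨j, hj, hωj⟩)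
  refine (measureReal_mono hcover).trans ((measureReal_union_le _ _).trans ?_)
  gcongr
  exact measureReal_biUnion_finset_le _ _

theorem measureReal_inter_avoid_le_two_mul (hp : ∀ i, 0 ≤ p i)
    (hdep : ∀ i ∈ t, ∀ S ⊆ t, Disjoint S (Γ i) →
      μ.real (E i ∩ ⋂ j ∈ S, (E j)ᶜ) ≤ p i * μ.real (⋂ j ∈ S, (E j)ᶜ))
    (hsum : ∀ i ∈ t, ∑ j ∈ Γ i, p j ≤ 1 / 4) (hS : S ⊆ t) {i : κ} (hi : i ∈ t) :
    μ.real (E i ∩ ⋂ j ∈ S, (E j)ᶜ) ≤ 2 * p i * μ.real (⋂ j ∈ S, (E j)ᶜ) := by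
  classical
  induction S using Finset.strongInduction generalizing i with
  | H S ih =>
    set far := S \ Γ i
    have hfar : far ⊆ S := sdiff_subset
    have hhalf : μ.real (⋂ j ∈ far, (E j)ᶜ) ≤ 2 * μ.real (⋂ j ∈ S, (E j)ᶜ) := by
      rcases hfar.eq_or_ssubset with heq | hlt
      · rw [heq]
        linarith [measureReal_nonneg (μ := μ) (s := ⋂ j ∈ S, (E j)ᶜ)]
      have hnear : ∑ j ∈ S ∩ Γ i, μ.real (E j ∩ ⋂ l ∈ far, (E l)ᶜ) ≤
          1 / 2 * μ.real (⋂ l ∈ far, (E l)ᶜ) := calc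
        _ ≤ ∑ j ∈ S ∩ Γ i, 2 * p j * μ.real (⋂ l ∈ far, (E l)ᶜ) :=
          sum_le_sum fun j hj => ih far hlt (hfar.trans hS) (hS (mem_inter.1 hj).1)
        _ = 2 * (∑ j ∈ S ∩ Γ i, p j) * μ.real (⋂ l ∈ far, (E l)ᶜ) := by
          rw [mul_sum, sum_mul]
        _ ≤ 2 * (1 / 4) * μ.real (⋂ l ∈ far, (E l)ᶜ) := by
          gcongr
          exact (sum_le_sum_of_subset_of_nonneg inter_subset_right fun j _ _ => hp j).trans
            (hsum i hi)
        _ = _ := by ring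
      linarith [measureReal_avoid_sdiff_le (μ := μ) (E := E) S (Γ i)]
    calc μ.real (E i ∩ ⋂ j ∈ S, (E j)ᶜ) ≤ μ.real (E i ∩ ⋂ j ∈ far, (E j)ᶜ) :=
          measureReal_mono (Set.inter_subset_inter_right _ (Set.biInter_subset_biInter_left hfar))
      _ ≤ p i * μ.real (⋂ j ∈ far, (E j)ᶜ) := hdep i hi far (hfar.trans hS) sdiff_disjoint
      _ ≤ p i * (2 * μ.real (⋂ j ∈ S, (E j)ᶜ)) := mul_le_mul_of_nonneg_left hhalf (hp i)
      _ = 2 * p i * μ.real (⋂ j ∈ S, (E j)ᶜ) := by ring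

theorem measureReal_avoid_pos_of_lopsided [NeZero μ] (hp : ∀ i, 0 ≤ p i)
    (hp_lt : ∀ i ∈ t, p i < 1 / 2)
    (hdep : ∀ i ∈ t, ∀ S ⊆ t, Disjoint S (Γ i) →
      μ.real (E i ∩ ⋂ j ∈ S, (E j)ᶜ) ≤ p i * μ.real (⋂ j ∈ S, (E j)ᶜ))
    (hsum : ∀ i ∈ t, ∑ j ∈ Γ i, p j ≤ 1 / 4) : 0 < μ.real (⋂ j ∈ t, (E j)ᶜ) := by
  classical
  suffices ∀ S ⊆ t, 0 < μ.real (⋂ j ∈ S, (E j)ᶜ) from this t subset_rfl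
  intro S
  induction S using Finset.induction_on with
  | empty => simp
  | insert i S _ ih =>
    intro hS
    obtain ⟨hi, hS⟩ := insert_subset_iff.1 hS
    have hcover : (⋂ j ∈ S, (E j)ᶜ) ⊆
        (⋂ j ∈ insert i S, (E j)ᶜ) ∪ (E i ∩ ⋂ j ∈ S, (E j)ᶜ) := by
      rw [set_biInter_insert, ← Set.union_inter_distrib_right, Set.compl_union_self, Set.univ_inter]
    have hadd := (measureReal_mono (μ := μ) hcover).trans (measureReal_union_le _ _)
    have hcond := measureReal_inter_avoid_le_two_mul hp hdep hsum hS hi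
    nlinarith [ih hS, hp_lt i hi]

end LocalLemma

section PartEmbedding

variable {W V ι : Type*} {part : W → ι} {side : V → ι}

/-- Injections `W ↪ V` that map the `i`-th part of `W` into the `i`-th part of `V`, for every `i`,
the parts being the fibres of `part` and `side`. -/
abbrev PartEmbedding (part : W → ι) (side : V → ι) : Type _ :=
  {f : W ↪ V // ∀ w, side (f w) = part w}

namespace PartEmbedding

theorem nonempty_of_card_fiber_le [Fintype W] [Fintype V] [DecidableEq ι]
    (h : ∀ i, #{w | part w = i} ≤ #{v | side v = i}) : Nonempty (PartEmbedding part side) := by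
  have hfiber (i : ι) : Nonempty ({w // part w = i} ↪ {v // side v = i}) :=
    Embedding.nonempty_of_card_le (by simpa only [Fintype.card_subtype] using h i)
  let g (i : ι) := (hfiber i).some
  exact ⟨⟨(Equiv.sigmaFiberEquiv part).symm.toEmbedding.trans
    ((Embedding.sigmaMap (.refl ι) g).trans (Equiv.sigmaFiberEquiv side).toEmbedding),
    fun w => (g (part w) ⟨w, rfl⟩).2⟩⟩

/-- The graph of `f`, as an injection into the set of all pairs that a part-preserving injection
may contain. -/
def toPullback (f : PartEmbedding part side) : W ↪ Pullback part side where
  toFun w := ⟨(w, f.1 w), (f.2 w).symm⟩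
  inj' _ _ h := congrArg Pullback.fst h

/-- The embedding obtained from `f` by exchanging the roles of two vertices in the same part. -/
def swap [DecidableEq V] (f : PartEmbedding part side) (x y : V) (h : side x = side y) :
    PartEmbedding part side :=
  ⟨f.1.trans (Equiv.swap x y).toEmbedding, fun w => by
    rw [← f.2 w, Embedding.trans_apply, Equiv.coe_toEmbedding, Equiv.swap_apply_def]
    split_ifs with hx hy
    · rw [hx, h]
    · rw [hy, h]
    · rfl⟩

theorem swap_injective [DecidableEq V] {x y : V} (h : side x = side y) :
    Injective fun f : PartEmbedding part side => f.swap x y h := fun _ _ hfg =>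
  Subtype.ext <| DFunLike.ext _ _ fun w =>
    (Equiv.swap x y).injective (DFunLike.congr_fun (congrArg Subtype.val hfg) w)

/-- The part-preserving injections whose graph contains the partial map `A`. -/
def extensions (A : Finset (Pullback part side)) : Set (PartEmbedding part side) :=
  {f | ∀ p ∈ A, f.1 p.fst = p.snd}

end PartEmbedding

/-- The pairs that agree with a pair in `A` in exactly one coordinate, so that the two cannot both
belong to the graph of an injection. -/
def clashes [Fintype W] [Fintype V] [DecidableEq W] [DecidableEq V] [DecidableEq ι]
    (A : Finset (Pullback part side)) : Finset (Pullback part side) :=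
  {q | ∃ p ∈ A, ¬ (p.fst = q.fst ↔ p.snd = q.snd)}

theorem disjoint_clashes_iff [Fintype W] [Fintype V] [DecidableEq W] [DecidableEq V] [DecidableEq ι]
    {A B : Finset (Pullback part side)} :
    Disjoint (clashes A) B ↔ ∀ p ∈ A, ∀ q ∈ B, (p.fst = q.fst ↔ p.snd = q.snd) := by
  simp only [disjoint_right, clashes, mem_filter, mem_univ, true_and, not_exists, not_and,
    Decidable.not_not]
  exact ⟨fun h p hp q hq => h hq p hp, fun h q hq p hp => h p hp q hq⟩

theorem card_filter_fst_eq [Fintype W] [Fintype V] [DecidableEq W] [DecidableEq ι] (w : W) :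
    #{q : Pullback part side | q.fst = w} = #{v | side v = part w} := by
  refine card_nbij Pullback.snd ?_ ?_ ?_
  · rintro ⟨⟨_, v⟩, h⟩ hq
    obtain rfl : _ = w := (mem_filter.1 hq).2
    exact mem_filter.2 ⟨mem_univ _, h.symm⟩
  · rintro p hp q hq hpq
    exact Subtype.ext (Prod.ext ((mem_filter.1 hp).2.trans (mem_filter.1 hq).2.symm) hpq)
  · intro v hv
    exact ⟨⟨(w, v), (mem_filter.1 hv).2.symm⟩, mem_filter.2 ⟨mem_univ _, rfl⟩, rfl⟩

theorem card_filter_snd_eq [Fintype W] [Fintype V] [DecidableEq V] [DecidableEq ι] (v : V) :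
    #{q : Pullback part side | q.snd = v} = #{w | part w = side v} := by
  refine card_nbij Pullback.fst ?_ ?_ ?_
  · rintro ⟨⟨w, _⟩, h⟩ hq
    obtain rfl : _ = v := (mem_filter.1 hq).2
    exact mem_filter.2 ⟨mem_univ _, h⟩
  · rintro p hp q hq hpq
    exact Subtype.ext (Prod.ext hpq ((mem_filter.1 hp).2.trans (mem_filter.1 hq).2.symm))
  · intro w hw
    exact ⟨⟨(w, v), (mem_filter.1 hw).2⟩, mem_filter.2 ⟨mem_univ _, rfl⟩, rfl⟩

theorem sub_card_le_card_filter_fst_eq [Fintype W] [Fintype V] [DecidableEq W] [DecidableEq V]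
    [DecidableEq ι] (w : W) (A : Finset (Pullback part side)) :
    #{v | side v = part w} - #A ≤
      #{q : Pullback part side | q.fst = w ∧ ∀ r ∈ A, r.snd ≠ q.snd} := by
  have hused : #{q : Pullback part side | q.fst = w ∧ ¬ ∀ r ∈ A, r.snd ≠ q.snd} ≤ #A := by
    rw [← card_image_of_injOn (f := Pullback.snd) fun p hp q hq hpq => Subtype.ext <|
      Prod.ext ((mem_filter.1 hp).2.1.trans (mem_filter.1 hq).2.1.symm) hpq]
    refine (card_le_card <| image_subset_iff.2 fun q hq => ?_).trans
      (card_image_le (f := Pullback.snd))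
    have hq' := (mem_filter.1 hq).2.2
    push Not at hq'
    obtain ⟨r, hr, hrq⟩ := hq'
    exact mem_image.2 ⟨r, hr, hrq⟩
  have hsplit := card_filter_add_card_filter_not (s := {q : Pullback part side | q.fst = w})
    fun q => ∀ r ∈ A, r.snd ≠ q.snd
  rw [filter_filter, filter_filter, card_filter_fst_eq] at hsplit
  lia

namespace PartEmbedding

theorem mem_extensions_of_swap [DecidableEq V] {f : PartEmbedding part side}
    {p : Pullback part side} {y : V} {h : side p.snd = side y} {B : Finset (Pullback part side)}
    (hf : f.1 p.fst = p.snd) (hB : ∀ q ∈ B, (p.fst = q.fst ↔ p.snd = q.snd))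
    (hswap : f.swap p.snd y h ∈ extensions B) : f ∈ extensions B := by
  intro q hq
  have hfq : Equiv.swap p.snd y (f.1 q.fst) = q.snd := hswap q hq
  by_cases hpq : p.fst = q.fst
  · rw [← hpq, hf, (hB q hq).1 hpq]
  · have hx : q.snd ≠ p.snd := fun h => hpq ((hB q hq).2 h.symm)
    have hy : q.snd ≠ y := fun h => hpq <| f.1.injective <| by
      rw [hf, ← (Equiv.swap p.snd y).injective.eq_iff, hfq, h, Equiv.swap_apply_left]
    rw [← Equiv.swap_apply_of_ne_of_ne hx hy, ← hfq, Equiv.swap_apply_self]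

theorem swap_mem_extensions [DecidableEq V] {f : PartEmbedding part side}
    {p : Pullback part side} {y : V} {h : side p.snd = side y} {A : Finset (Pullback part side)}
    (hf : f.1 p.fst = p.snd) (hpA : p ∉ A) (hy : ∀ q ∈ A, q.snd ≠ y) (hfA : f ∈ extensions A) :
    f.swap p.snd y h ∈ extensions A := by
  intro q hq
  have hx : q.snd ≠ p.snd := fun h => hpA <| by
    have : q.fst = p.fst := f.1.injective (by rw [hf, hfA q hq, h])
    rwa [← Subtype.ext (Prod.ext this h)]
  change Equiv.swap p.snd y (f.1 q.fst) = q.snd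
  rw [hfA q hq, Equiv.swap_apply_of_ne_of_ne hx (hy q hq)]

theorem extensions_empty : extensions (∅ : Finset (Pullback part side)) = Set.univ := by
  simp [extensions]

theorem mem_extensions_insert [DecidableEq W] [DecidableEq V] {f : PartEmbedding part side}
    {p : Pullback part side} {A : Finset (Pullback part side)} :
    f ∈ extensions (insert p A) ↔ f.1 p.fst = p.snd ∧ f ∈ extensions A := by
  simp [extensions]

theorem extensions_insert_subset [DecidableEq W] [DecidableEq V] (p : Pullback part side)
    (A : Finset (Pullback part side)) : extensions (insert p A) ⊆ extensions A :=
  fun _ hf => (mem_extensions_insert.1 hf).2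

variable [DecidableEq W] [DecidableEq V]
  {A : Finset (Pullback part side)} {S : Finset (Finset (Pullback part side))}

theorem ncard_extensions_insert_le [Finite V] {p q : Pullback part side} (hfst : q.fst = p.fst)
    (hpA : p ∉ A) (hqA : ∀ r ∈ A, r.snd ≠ q.snd)
    (hpS : ∀ B ∈ S, ∀ r ∈ B, (p.fst = r.fst ↔ p.snd = r.snd)) :
    (extensions (insert p A) ∩ ⋂ B ∈ S, (extensions B)ᶜ).ncard ≤
      (extensions (insert q A) ∩ ⋂ B ∈ S, (extensions B)ᶜ).ncard := by
  have hside : side p.snd = side q.snd := by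
    rw [← show part p.fst = side p.snd from p.2, ← hfst]
    exact q.2
  refine Set.ncard_le_ncard_of_injOn (fun f => f.swap p.snd q.snd hside) ?_
    (swap_injective hside).injOn
  rintro f ⟨hf, hfS⟩
  obtain ⟨hfp, hfA⟩ := mem_extensions_insert.1 hf
  refine ⟨mem_extensions_insert.2 ⟨?_, swap_mem_extensions hfp hpA hqA hfA⟩,
    Set.mem_iInter₂.2 fun B hB hfB =>
      Set.mem_iInter₂.1 hfS B hB (mem_extensions_of_swap hfp (hpS B hB) hfB)⟩
  change Equiv.swap p.snd q.snd (f.1 q.fst) = q.snd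
  rw [hfst, hfp, Equiv.swap_apply_left]

theorem ncard_extensions_insert_mul_le [Finite V] {p : Pullback part side} (hpA : p ∉ A)
    (hpS : ∀ B ∈ S, ∀ r ∈ B, (p.fst = r.fst ↔ p.snd = r.snd)) {Y : Finset (Pullback part side)}
    (hY : ∀ q ∈ Y, q.fst = p.fst ∧ ∀ r ∈ A, r.snd ≠ q.snd) :
    (extensions (insert p A) ∩ ⋂ B ∈ S, (extensions B)ᶜ).ncard * #Y ≤
      (extensions A ∩ ⋂ B ∈ S, (extensions B)ᶜ).ncard := by
  set E : Pullback part side → Set (PartEmbedding part side) :=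
    fun q => extensions (insert q A) ∩ ⋂ B ∈ S, (extensions B)ᶜ
  have hdisj : Pairwise (Disjoint on fun q : Y => E q) := by
    intro q q' hne
    refine Set.disjoint_left.2 fun f hf hf' => hne (Subtype.ext (Subtype.ext (Prod.ext ?_ ?_)))
    · exact (hY q q.2).1.trans (hY q' q'.2).1.symm
    · have hq : f.1 (q : Pullback part side).fst = q.1.snd := (mem_extensions_insert.1 hf.1).1
      have hq' : f.1 (q' : Pullback part side).fst = q'.1.snd := (mem_extensions_insert.1 hf'.1).1
      exact hq.symm.trans <| (congrArg f.1 ((hY q q.2).1.trans (hY q' q'.2).1.symm)).trans hq'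
  calc (E p).ncard * #Y = ∑ _q : Y, (E p).ncard := by simp [mul_comm]
    _ ≤ ∑ q : Y, (E q).ncard :=
        sum_le_sum fun q _ => ncard_extensions_insert_le (hY q q.2).1 hpA (hY q q.2).2 hpS
    _ = (⋃ q : Y, E q).ncard := by
        rw [Set.ncard_iUnion_of_finite (fun _ => Set.toFinite _) hdisj, finsum_eq_sum_of_fintype]
    _ ≤ _ := Set.ncard_le_ncard <| Set.iUnion_subset fun q =>
        Set.inter_subset_inter_left _ (extensions_insert_subset _ _)

theorem ncard_extensions_inter_mul_pow_le [Fintype W] [Fintype V] [DecidableEq ι] {n r : ℕ}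
    (hside : ∀ i, n ≤ #{v | side v = i}) (hA : #A ≤ r + 1) (hS : ∀ B ∈ S, Disjoint (clashes A) B) :
    (extensions A ∩ ⋂ B ∈ S, (extensions B)ᶜ).ncard * (n - r) ^ #A ≤
      (⋂ B ∈ S, (extensions B)ᶜ).ncard := by
  induction A using Finset.induction_on with
  | empty => simp [extensions_empty]
  | insert p A hpA ih =>
    rw [card_insert_of_notMem hpA] at hA ⊢
    have hclash (B) (hB : B ∈ S) := disjoint_clashes_iff.1 (hS B hB)
    have hfree : n - r ≤ #{q : Pullback part side | q.fst = p.fst ∧ ∀ q' ∈ A, q'.snd ≠ q.snd} :=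
      (by lia : n - r ≤ n - #A).trans <|
        (Nat.sub_le_sub_right (hside _) _).trans (sub_card_le_card_filter_fst_eq p.fst A)
    calc _ = (extensions (insert p A) ∩ ⋂ B ∈ S, (extensions B)ᶜ).ncard * (n - r) *
          (n - r) ^ #A := by ring
      _ ≤ (extensions A ∩ ⋂ B ∈ S, (extensions B)ᶜ).ncard * (n - r) ^ #A := by
        gcongr
        refine (Nat.mul_le_mul_left _ hfree).trans <| ncard_extensions_insert_mul_le hpA
          (fun B hB => hclash B hB p (mem_insert_self p A)) fun q hq => (mem_filter.1 hq).2
      _ ≤ _ := ih (by lia) fun B hB => disjoint_clashes_iff.2 fun q hq =>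
          hclash B hB q (mem_insert_of_mem hq)

end PartEmbedding

end PartEmbedding

section MonochromaticPairs

variable {X C : Type*}

/-- The spanning subgraph formed by the edges of `L` of colour `a`. -/
def colorClass (L : SimpleGraph X) (χ : Sym2 X → C) (a : C) : SimpleGraph X where
  Adj p q := L.Adj p q ∧ χ s(p, q) = a
  symm := ⟨fun _ _ h => ⟨h.1.symm, Sym2.eq_swap ▸ h.2⟩⟩
  loopless := ⟨fun _ h => h.1.ne rfl⟩

instance [DecidableEq C] (L : SimpleGraph X) [DecidableRel L.Adj] (χ : Sym2 X → C) (a : C) :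
    DecidableRel (colorClass L χ a).Adj :=
  fun _ _ => inferInstanceAs (Decidable (_ ∧ _))

theorem mem_edgeSet_colorClass {L : SimpleGraph X} {χ : Sym2 X → C} {a : C} {e : Sym2 X} :
    e ∈ (colorClass L χ a).edgeSet ↔ e ∈ L.edgeSet ∧ χ e = a :=
  e.ind fun _ _ => Iff.rfl

theorem card_toFinset_of_mem_edgeSet [DecidableEq X] {L : SimpleGraph X} {e : Sym2 X}
    (he : e ∈ L.edgeSet) : #e.toFinset = 2 :=
  e.card_toFinset_of_not_isDiag (L.not_isDiag_of_mem_edgeSet he)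

variable [Fintype X] [DecidableEq X] [DecidableEq C]

/-- The vertex sets of the pairs of distinct edges of `L` of the same colour. The pair itself is
forgotten, since only its vertex set matters for the bad event that the pair defines. -/
def monochromaticPairs (L : SimpleGraph X) [DecidableRel L.Adj] (χ : Sym2 X → C) :
    Finset (Finset X) :=
  {x ∈ L.edgeFinset ×ˢ L.edgeFinset | x.1 ≠ x.2 ∧ χ x.1 = χ x.2}.image
    fun x => x.1.toFinset ∪ x.2.toFinset

variable {L : SimpleGraph X} [DecidableRel L.Adj] {χ : Sym2 X → C} {B : Finset X}

theorem mem_monochromaticPairs : B ∈ monochromaticPairs L χ ↔ ∃ e ∈ L.edgeSet, ∃ e' ∈ L.edgeSet,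
    e ≠ e' ∧ χ e = χ e' ∧ e.toFinset ∪ e'.toFinset = B := by
  simp [monochromaticPairs, and_assoc]

theorem card_of_mem_monochromaticPairs (hB : B ∈ monochromaticPairs L χ) : #B = 3 ∨ #B = 4 := by
  obtain ⟨e, he, e', he', hne, -, rfl⟩ := mem_monochromaticPairs.1 hB
  have hcard := card_toFinset_of_mem_edgeSet he
  have hcard' := card_toFinset_of_mem_edgeSet he'
  have hlt : 2 < #(e.toFinset ∪ e'.toFinset) := by
    rw [← hcard]
    refine card_lt_card (subset_union_left.ssubset_of_ne fun heq => hne ?_)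
    have hsub : e'.toFinset = e.toFinset :=
      eq_of_subset_of_card_le (union_eq_left.1 heq.symm) (by rw [hcard, hcard'])
    exact Sym2.ext fun x => by rw [← Sym2.mem_toFinset, ← Sym2.mem_toFinset, hsub]
  have hle := card_union_le e.toFinset e'.toFinset
  lia

theorem exists_mem_incidenceFinset_of_mem_monochromaticPairs (hB : B ∈ monochromaticPairs L χ)
    {p : X} (hp : p ∈ B) : ∃ e ∈ L.incidenceFinset p,
      ∃ e' ∈ (colorClass L χ (χ e)).edgeFinset, e.toFinset ∪ e'.toFinset = B := by
  obtain ⟨e, he, e', he', -, hcol, rfl⟩ := mem_monochromaticPairs.1 hB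
  simp only [SimpleGraph.mem_incidenceFinset, SimpleGraph.mem_edgeFinset, mem_edgeSet_colorClass]
  rcases mem_union.1 hp with hp | hp
  · exact ⟨e, ⟨he, Sym2.mem_toFinset.1 hp⟩, e', ⟨he', hcol.symm⟩, rfl⟩
  · exact ⟨e', ⟨he', Sym2.mem_toFinset.1 hp⟩, e, ⟨he, hcol⟩, union_comm _ _⟩

variable {d ℓ K : ℕ}

theorem card_monochromaticPairs_mem_le (hd : ∀ p, L.degree p ≤ d)
    (hK : ∀ a, #(colorClass L χ a).edgeFinset ≤ K) (p : X) :
    #{B ∈ monochromaticPairs L χ | p ∈ B} ≤ d * K := by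
  calc #{B ∈ monochromaticPairs L χ | p ∈ B}
      ≤ #((L.incidenceFinset p).biUnion fun e =>
          (colorClass L χ (χ e)).edgeFinset.image fun e' => e.toFinset ∪ e'.toFinset) := by
        refine card_le_card fun B hB => ?_
        obtain ⟨hB, hp⟩ := mem_filter.1 hB
        obtain ⟨e, he, e', he', rfl⟩ := exists_mem_incidenceFinset_of_mem_monochromaticPairs hB hp
        exact mem_biUnion.2 ⟨e, he, mem_image_of_mem _ he'⟩
    _ ≤ #(L.incidenceFinset p) * K :=
        card_biUnion_le_card_mul _ _ _ fun e _ => card_image_le.trans (hK _)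
    _ ≤ d * K := by
        rw [L.card_incidenceFinset_eq_degree]
        gcongr
        exact hd p

theorem card_monochromaticPairs_mem_card_eq_three_le (hd : ∀ p, L.degree p ≤ d)
    (hℓ : ∀ a p, (colorClass L χ a).degree p ≤ ℓ) (p : X) :
    #{B ∈ monochromaticPairs L χ | p ∈ B ∧ #B = 3} ≤ d * (2 * ℓ) := by
  calc #{B ∈ monochromaticPairs L χ | p ∈ B ∧ #B = 3}
      ≤ #((L.incidenceFinset p).biUnion fun e => (e.toFinset.biUnion fun x =>
          (colorClass L χ (χ e)).incidenceFinset x).image fun e' =>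
            e.toFinset ∪ e'.toFinset) := by
        refine card_le_card fun B hB => ?_
        obtain ⟨hB, hp, hcard⟩ := mem_filter.1 hB
        obtain ⟨e, he, e', he', rfl⟩ := exists_mem_incidenceFinset_of_mem_monochromaticPairs hB hp
        have hmeet : ¬ Disjoint e.toFinset e'.toFinset := fun hdisj => by
          rw [card_union_of_disjoint hdisj,
            card_toFinset_of_mem_edgeSet ((L.mem_incidenceFinset _ _).1 he).1,
            card_toFinset_of_mem_edgeSet (SimpleGraph.mem_edgeFinset.1 he')] at hcard
          contradiction
        obtain ⟨x, hx, hx'⟩ := not_disjoint_iff.1 hmeet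
        exact mem_biUnion.2 ⟨e, he, mem_image_of_mem _ <| mem_biUnion.2 ⟨x, hx,
          (SimpleGraph.mem_incidenceFinset _ _ _).2
            ⟨SimpleGraph.mem_edgeFinset.1 he', Sym2.mem_toFinset.1 hx'⟩⟩⟩
    _ ≤ #(L.incidenceFinset p) * (2 * ℓ) := by
        refine card_biUnion_le_card_mul _ _ _ fun e he => card_image_le.trans ?_
        rw [← card_toFinset_of_mem_edgeSet ((L.mem_incidenceFinset _ _).1 he).1]
        refine card_biUnion_le_card_mul _ _ _ fun x _ => ?_
        rw [SimpleGraph.card_incidenceFinset_eq_degree]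
        exact hℓ _ x
    _ ≤ d * (2 * ℓ) := by
        rw [L.card_incidenceFinset_eq_degree]
        gcongr
        exact hd p

theorem sum_pow_card_monochromaticPairs_le (hd : ∀ p, L.degree p ≤ d)
    (hℓ : ∀ a p, (colorClass L χ a).degree p ≤ ℓ)
    (hK : ∀ a, #(colorClass L χ a).edgeFinset ≤ K) {q : ℝ} (hq : 0 ≤ q) (p : X) :
    ∑ B ∈ monochromaticPairs L χ with p ∈ B, q ^ #B ≤ d * (2 * ℓ) * q ^ 3 + d * K * q ^ 4 := by
  rw [← sum_filter_add_sum_filter_not _ (fun B => #B = 3), filter_filter, filter_filter]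
  gcongr ?_ + ?_
  · calc ∑ B ∈ monochromaticPairs L χ with p ∈ B ∧ #B = 3, q ^ #B
        = #{B ∈ monochromaticPairs L χ | p ∈ B ∧ #B = 3} * q ^ 3 := by
          rw [sum_congr rfl fun B hB => by rw [(mem_filter.1 hB).2.2], sum_const, nsmul_eq_mul]
      _ ≤ d * (2 * ℓ) * q ^ 3 := by
          gcongr
          exact_mod_cast card_monochromaticPairs_mem_card_eq_three_le hd hℓ p
  · calc ∑ B ∈ monochromaticPairs L χ with p ∈ B ∧ ¬ #B = 3, q ^ #B
        = #{B ∈ monochromaticPairs L χ | p ∈ B ∧ ¬ #B = 3} * q ^ 4 := by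
          rw [sum_congr rfl fun B hB => by
            rw [(card_of_mem_monochromaticPairs (mem_filter.1 hB).1).resolve_left
              (mem_filter.1 hB).2.2], sum_const, nsmul_eq_mul]
      _ ≤ d * K * q ^ 4 := by
          gcongr
          exact_mod_cast (card_le_card <| monotone_filter_right _ fun _ _ => And.left).trans
            (card_monochromaticPairs_mem_le hd hK p)

end MonochromaticPairs

theorem count_real_eq_ncard {Ω : Type*} [Finite Ω] [MeasurableSpace Ω] [DiscreteMeasurableSpace Ω]
    (s : Set Ω) : Measure.count.real s = s.ncard := by
  rw [Measure.real, Measure.count_apply .of_discrete, ← s.toFinite.cast_ncard_eq,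
    ENat.toENNReal_coe, ENNReal.toReal_natCast]

theorem sum_filter_not_disjoint_le {X : Type*} [DecidableEq X] (t : Finset (Finset X))
    (Q : Finset X) {w : Finset X → ℝ} (hw : ∀ B, 0 ≤ w B) {M : ℝ}
    (hM : ∀ p, ∑ B ∈ t with p ∈ B, w B ≤ M) : ∑ B ∈ t with ¬ Disjoint Q B, w B ≤ #Q * M := by
  calc ∑ B ∈ t with ¬ Disjoint Q B, w B
      ≤ ∑ B ∈ t, #{p ∈ Q | p ∈ B} • w B := by
        rw [sum_filter]
        refine sum_le_sum fun B _ => ?_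
        split_ifs with h
        · exact nsmul_nonneg (hw B) _
        · obtain ⟨p, hpQ, hpB⟩ := not_disjoint_iff.1 h
          exact le_self_nsmul (hw B) (card_pos.2 ⟨p, mem_filter.2 ⟨hpQ, hpB⟩⟩).ne'
    _ = ∑ p ∈ Q, ∑ B ∈ t with p ∈ B, w B := by
        simp only [sum_filter]
        rw [sum_comm]
        simp only [← sum_filter, sum_const]
    _ ≤ #Q * M := by
        rw [← nsmul_eq_mul]
        exact sum_le_card_nsmul _ _ _ fun p _ => hM p

section LiftedGraph

variable {W V ι : Type*} {part : W → ι} {side : V → ι}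

theorem side_ne_of_adj_comap {G : SimpleGraph W} (hind : ∀ u v, G.Adj u v → part u ≠ part v)
    {p q : Pullback part side} (hpq : (G.comap Pullback.fst).Adj p q) :
    side p.snd ≠ side q.snd := fun h =>
  hind _ _ hpq (p.2.trans (h.trans q.2.symm))

variable [Fintype W] [Fintype V] [DecidableEq ι] {n : ℕ}

theorem card_clashes_le [DecidableEq W] [DecidableEq V] (hpart : ∀ i, #{w | part w = i} ≤ n)
    (hside : ∀ i, #{v | side v = i} ≤ n) (A : Finset (Pullback part side)) :
    #(clashes A) ≤ #A * (2 * n) := by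
  calc #(clashes A)
      ≤ #(A.biUnion fun p => (univ.filter fun q : Pullback part side => q.fst = p.fst) ∪
          univ.filter fun q => q.snd = p.snd) := by
        refine card_le_card fun q hq => ?_
        obtain ⟨p, hp, hpq⟩ := (mem_filter.1 hq).2
        refine mem_biUnion.2 ⟨p, hp, ?_⟩
        rw [mem_union, mem_filter_univ, mem_filter_univ]
        tauto
    _ ≤ #A * (2 * n) := card_biUnion_le_card_mul _ _ _ fun p _ => by
        rw [two_mul]
        refine (card_union_le _ _).trans (add_le_add ?_ ?_)
        · rw [card_filter_fst_eq]
          exact hside _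
        · rw [card_filter_snd_eq]
          exact hpart _

namespace PartEmbedding

theorem count_real_extensions_inter_le [DecidableEq W] [DecidableEq V]
    [MeasurableSpace (PartEmbedding part side)] [DiscreteMeasurableSpace (PartEmbedding part side)]
    {r : ℕ} (hrn : r < n) (hside : ∀ i, n ≤ #{v | side v = i}) {A : Finset (Pullback part side)}
    (hA : #A ≤ r + 1) {S : Finset (Finset (Pullback part side))}
    (hS : ∀ B ∈ S, Disjoint (clashes A) B) :
    Measure.count.real (extensions A ∩ ⋂ B ∈ S, (extensions B)ᶜ) ≤
      ((n - r : ℕ) : ℝ)⁻¹ ^ #A * Measure.count.real (⋂ B ∈ S, (extensions B)ᶜ) := by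
  rw [count_real_eq_ncard, count_real_eq_ncard, inv_pow, ← div_eq_inv_mul,
    le_div_iff₀ (pow_pos (Nat.cast_pos.2 (Nat.sub_pos_of_lt hrn)) _)]
  exact_mod_cast ncard_extensions_inter_mul_pow_le hside hA hS

theorem exists_forall_notMem_extensions [DecidableEq W] [DecidableEq V] {r : ℕ} (hrn : r < n)
    (hpart : ∀ i, #{w | part w = i} ≤ n) (hside : ∀ i, #{v | side v = i} = n)
    {t : Finset (Finset (Pullback part side))} (hempty : ∅ ∉ t) (ht : ∀ B ∈ t, #B ≤ r + 1)
    (hM : ∀ p, ∑ B ∈ t with p ∈ B, ((n - r : ℕ) : ℝ)⁻¹ ^ #B ≤ 1 / (8 * (r + 1) * n)) :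
    ∃ f : PartEmbedding part side, ∀ B ∈ t, f ∉ extensions B := by
  have hn : 1 ≤ n := by lia
  have : Nonempty (PartEmbedding part side) :=
    nonempty_of_card_fiber_le fun i => (hpart i).trans (hside i).ge
  let _ : MeasurableSpace (PartEmbedding part side) := ⊤
  have hweight (B : Finset (Pullback part side)) : 0 ≤ ((n - r : ℕ) : ℝ)⁻¹ ^ #B := by positivity
  suffices h : 0 < Measure.count.real (⋂ B ∈ t, (extensions B)ᶜ) by
    rw [count_real_eq_ncard, Nat.cast_pos, Set.ncard_pos] at h
    obtain ⟨f, hf⟩ := h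
    exact ⟨f, Set.mem_iInter₂.1 hf⟩
  refine measureReal_avoid_pos_of_lopsided (p := fun B => ((n - r : ℕ) : ℝ)⁻¹ ^ #B)
    (Γ := fun A => {B ∈ t | ¬ Disjoint (clashes A) B}) hweight ?_ ?_ ?_
  · intro B hB
    obtain ⟨p, hp⟩ := nonempty_iff_ne_empty.2 (ne_of_mem_of_not_mem hB hempty)
    calc ((n - r : ℕ) : ℝ)⁻¹ ^ #B
        ≤ ∑ B ∈ t with p ∈ B, ((n - r : ℕ) : ℝ)⁻¹ ^ #B :=
          single_le_sum (fun B _ => hweight B) (mem_filter.2 ⟨hB, hp⟩)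
      _ ≤ 1 / (8 * (r + 1) * n) := hM p
      _ ≤ 1 / (8 * (0 + 1) * 1) := by
          have : (1 : ℝ) ≤ n := by exact_mod_cast hn
          gcongr
          exact r.cast_nonneg
      _ < 1 / 2 := by norm_num
  · intro A hA S hS hdisj
    refine count_real_extensions_inter_le hrn (fun i => (hside i).ge) (ht A hA) fun B hB => ?_
    by_contra h
    exact disjoint_left.1 hdisj hB (mem_filter.2 ⟨hS hB, h⟩)
  · intro A hA
    refine (sum_filter_not_disjoint_le t _ hweight hM).trans ?_
    have hclashes : #(clashes A) ≤ (r + 1) * (2 * n) :=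
      (card_clashes_le hpart (fun i => (hside i).le) A).trans (Nat.mul_le_mul_right _ (ht A hA))
    calc #(clashes A) * (1 / (8 * (r + 1) * n))
        ≤ ((r + 1) * (2 * n)) * (1 / (8 * (r + 1) * n) : ℝ) := by
          gcongr
          exact_mod_cast hclashes
      _ = 1 / 4 := by
          have : (n : ℝ) ≠ 0 := by positivity
          field_simp
          norm_num

end PartEmbedding

variable {C : Type*} {G : SimpleGraph W} [DecidableRel G.Adj] {c : Sym2 V → C} {Δ k : ℕ}

theorem degree_comap_fst_le (hside : ∀ i, #{v | side v = i} ≤ n) (hdeg : ∀ w, G.degree w ≤ Δ)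
    (p : Pullback part side) : (G.comap Pullback.fst).degree p ≤ n * Δ := by
  classical
  calc (G.comap Pullback.fst).degree p ≤ n * #(G.neighborFinset p.fst) := by
        refine card_le_mul_card_image_of_maps_to (f := Pullback.fst) (fun q hq => ?_) n
          fun w _ => ?_
        · simpa using hq
        · exact (card_le_card (filter_subset_filter _ (subset_univ _))).trans
            ((card_filter_fst_eq w).trans_le (hside _))
    _ ≤ n * Δ := Nat.mul_le_mul_left n (hdeg p.fst)

variable [DecidableEq C]

theorem degree_colorClass_comap_fst_le (hind : ∀ u v, G.Adj u v → part u ≠ part v)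
    (hdeg : ∀ w, G.degree w ≤ Δ)
    (hc : ∀ a, #(colorClass ((⊤ : SimpleGraph ι).comap side) c a).edgeFinset ≤ k) (a : C)
    (p : Pullback part side) :
    (colorClass (G.comap Pullback.fst) (fun e => c (e.map Pullback.snd)) a).degree p ≤ Δ * k := by
  classical
  set H := colorClass ((⊤ : SimpleGraph ι).comap side) c a
  calc _ ≤ #(G.neighborFinset p.fst ×ˢ H.neighborFinset p.snd) := by
        refine card_le_card_of_injOn (fun q : Pullback part side => (q.fst, q.snd))
          (fun q hq => ?_) fun q _ q' _ h => Subtype.ext h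
        have hadj := (SimpleGraph.mem_neighborFinset _ _ _).1 hq
        exact mem_product.2 ⟨(SimpleGraph.mem_neighborFinset _ _ _).2 hadj.1,
          (SimpleGraph.mem_neighborFinset _ _ _).2 ⟨side_ne_of_adj_comap hind hadj.1, hadj.2⟩⟩
    _ = G.degree p.fst * H.degree p.snd := card_product _ _
    _ ≤ Δ * k := Nat.mul_le_mul (hdeg _) ((H.degree_le_card_edgeFinset _).trans (hc a))

theorem card_edgeFinset_comap_fst_filter_map_snd_le [DecidableEq V]
    (hpart : ∀ i, #{w | part w = i} ≤ n) (hdeg : ∀ w, G.degree w ≤ Δ) (e : Sym2 V) :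
    #{e' ∈ (G.comap (Pullback.fst : Pullback part side → W)).edgeFinset |
      e'.map Pullback.snd = e} ≤ n * Δ := by
  classical
  induction e with | _ x y
  calc _ ≤ #((univ.filter fun p : Pullback part side => p.snd = x).biUnion fun p =>
        ((G.comap Pullback.fst).neighborFinset p |>.filter fun q => q.snd = y).image
          fun q => s(p, q)) := by
        refine card_le_card fun e' he' => ?_
        induction e' with | _ p q
        obtain ⟨hadj, hsnd⟩ := mem_filter.1 he'
        rw [SimpleGraph.mem_edgeFinset, SimpleGraph.mem_edgeSet] at hadj
        simp only [mem_biUnion, mem_image, mem_filter, mem_univ, true_and,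
          SimpleGraph.mem_neighborFinset]
        rcases Sym2.eq_iff.1 hsnd with ⟨hp, hq⟩ | ⟨hp, hq⟩
        · exact ⟨p, hp, q, ⟨hadj, hq⟩, rfl⟩
        · exact ⟨q, hq, p, ⟨hadj.symm, hp⟩, Sym2.eq_swap⟩
    _ ≤ #(univ.filter fun p : Pullback part side => p.snd = x) * Δ := by
        refine card_biUnion_le_card_mul _ _ _ fun p _ => card_image_le.trans ?_
        refine (card_le_card_of_injOn (t := G.neighborFinset p.fst) Pullback.fst ?_ ?_).trans
          (hdeg p.fst)
        · intro q hq
          simpa using (mem_filter.1 hq).1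
        · intro q hq q' hq' h
          exact Subtype.ext <|
            Prod.ext h ((mem_filter.1 hq).2.trans (mem_filter.1 hq').2.symm)
    _ ≤ n * Δ := by
        rw [card_filter_snd_eq]
        exact Nat.mul_le_mul_right _ (hpart _)

theorem card_edgeFinset_colorClass_comap_fst_le (hind : ∀ u v, G.Adj u v → part u ≠ part v)
    (hpart : ∀ i, #{w | part w = i} ≤ n) (hdeg : ∀ w, G.degree w ≤ Δ)
    (hc : ∀ a, #(colorClass ((⊤ : SimpleGraph ι).comap side) c a).edgeFinset ≤ k) (a : C) :
    #(colorClass (G.comap (Pullback.fst : Pullback part side → W))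
      (fun e => c (e.map Pullback.snd)) a).edgeFinset ≤ n * Δ * k := by
  classical
  calc _ ≤ n * Δ * #(colorClass ((⊤ : SimpleGraph ι).comap side) c a).edgeFinset := by
        refine card_le_mul_card_image_of_maps_to (f := Sym2.map Pullback.snd) ?_ _ ?_
        · intro e he
          induction e with | _ p q
          obtain ⟨hadj, hcol⟩ := SimpleGraph.mem_edgeFinset.1 he
          exact SimpleGraph.mem_edgeFinset.2 ⟨side_ne_of_adj_comap hind hadj, hcol⟩
        · intro e _
          refine (card_le_card <| filter_subset_filter _ fun e' he' => ?_).trans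
            (card_edgeFinset_comap_fst_filter_map_snd_le hpart hdeg e)
          exact SimpleGraph.mem_edgeFinset.2
            (mem_edgeSet_colorClass.1 (SimpleGraph.mem_edgeFinset.1 he')).1
    _ ≤ n * Δ * k := Nat.mul_le_mul_left _ (hc a)

theorem PartEmbedding.injOn_color [DecidableEq W] [DecidableEq V] (f : PartEmbedding part side)
    (hf : ∀ B ∈ monochromaticPairs (G.comap Pullback.fst) fun e => c (e.map Pullback.snd),
      f ∉ extensions B) : Set.InjOn (fun e => c (e.map f.1)) G.edgeSet := by
  intro e he e' he' hcol
  by_contra hne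
  let lift : G →g G.comap (Pullback.fst : Pullback part side → W) := ⟨f.toPullback, id⟩
  refine hf _ (mem_monochromaticPairs.2 ⟨_, lift.map_mem_edgeSet he, _, lift.map_mem_edgeSet he',
    (Sym2.map.injective f.toPullback.injective).ne hne, ?_, rfl⟩) fun p hp => ?_
  · rw [Sym2.map_map, Sym2.map_map]
    exact hcol
  · have : ∃ w, f.toPullback w = p := by
      rcases mem_union.1 hp with hp | hp <;>
        exact (Sym2.mem_map.1 (Sym2.mem_toFinset.1 hp)).imp fun _ => And.right
    obtain ⟨w, rfl⟩ := this
    rfl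

theorem rainbow_weight_le {n Δ k : ℕ} (hk : 110 * Δ ^ 2 * k ≤ n) (hn : 110 ≤ n) :
    ((n * Δ : ℕ) : ℝ) * (2 * (Δ * k : ℕ)) * ((n - 3 : ℕ) : ℝ)⁻¹ ^ 3 +
      (n * Δ : ℕ) * (n * Δ * k : ℕ) * ((n - 3 : ℕ) : ℝ)⁻¹ ^ 4 ≤ 1 / (8 * ((3 : ℕ) + 1) * n) := by
  have hn' : (110 : ℝ) ≤ n := by exact_mod_cast hn
  have hk' : (Δ : ℝ) ^ 2 * k ≤ n / 110 := by
    rw [le_div_iff₀' (by norm_num), ← mul_assoc]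
    exact_mod_cast hk
  set q := ((n - 3 : ℕ) : ℝ)⁻¹ with hq
  have hs : n * q ≤ 110 / 107 := by
    rw [hq, Nat.cast_sub (by lia), ← div_eq_mul_inv, div_le_div_iff₀] <;> push_cast <;> linarith
  rw [le_div_iff₀ (by positivity)]
  push_cast
  calc (n * Δ * (2 * (Δ * k)) * q ^ 3 + n * Δ * (n * Δ * k) * q ^ 4) * (8 * (3 + 1) * n)
      = 32 * (Δ ^ 2 * k) * (2 * n ^ 2 * q ^ 3 + n ^ 3 * q ^ 4) := by ring
    _ ≤ 32 * (n / 110) * (2 * n ^ 2 * q ^ 3 + n ^ 3 * q ^ 4) := by gcongr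
    _ = 32 / 110 * (2 * (n * q) ^ 3 + (n * q) ^ 4) := by ring
    _ ≤ 32 / 110 * (2 * (110 / 107) ^ 3 + (110 / 107) ^ 4) := by gcongr
    _ ≤ 1 := by norm_num

theorem le_of_mem_monochromaticPairs_comap_fst [DecidableEq W] [DecidableEq V]
    (hind : ∀ u v, G.Adj u v → part u ≠ part v)
    (hpart : ∀ i, #{w | part w = i} ≤ n) (hside : ∀ i, #{v | side v = i} ≤ n)
    (hdeg : ∀ w, G.degree w ≤ Δ) (hk : 110 * Δ ^ 2 * k ≤ n)
    (hc : ∀ a, #(colorClass ((⊤ : SimpleGraph ι).comap side) c a).edgeFinset ≤ k)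
    {B : Finset (Pullback part side)} (hB : B ∈ monochromaticPairs (G.comap Pullback.fst)
      fun e => c (e.map Pullback.snd)) : 110 ≤ n := by
  obtain ⟨p, hp⟩ : B.Nonempty := card_pos.1 (by have := card_of_mem_monochromaticPairs hB; lia)
  have hcount : 0 < n * Δ * (n * Δ * k) :=
    (card_pos.2 ⟨B, mem_filter.2 ⟨hB, hp⟩⟩).trans_le <| card_monochromaticPairs_mem_le
      (degree_comap_fst_le hside hdeg)
      (card_edgeFinset_colorClass_comap_fst_le hind hpart hdeg hc) p
  have hpos : 0 < Δ ^ 2 * k := Nat.pos_of_ne_zero fun h => by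
    rw [show n * Δ * (n * Δ * k) = n ^ 2 * (Δ ^ 2 * k) by ring, h] at hcount
    exact hcount.ne rfl
  lia

theorem PartEmbedding.exists_forall_monochromaticPairs_notMem_extensions
    [DecidableEq W] [DecidableEq V] (hind : ∀ u v, G.Adj u v → part u ≠ part v)
    (hpart : ∀ i, #{w | part w = i} ≤ n) (hside : ∀ i, #{v | side v = i} = n)
    (hdeg : ∀ w, G.degree w ≤ Δ) (hk : 110 * Δ ^ 2 * k ≤ n)
    (hc : ∀ a, #(colorClass ((⊤ : SimpleGraph ι).comap side) c a).edgeFinset ≤ k) :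
    ∃ f : PartEmbedding part side, ∀ B ∈ monochromaticPairs (G.comap Pullback.fst)
      fun e => c (e.map Pullback.snd), f ∉ extensions B := by
  rcases (monochromaticPairs (G.comap (Pullback.fst : Pullback part side → W))
    fun e => c (e.map Pullback.snd)).eq_empty_or_nonempty with hnone | ⟨B, hB⟩
  · obtain ⟨f⟩ := nonempty_of_card_fiber_le fun i => (hpart i).trans (hside i).ge
    exact ⟨f, by simp [hnone]⟩
  have hside' (i) := (hside i).le
  have hn := le_of_mem_monochromaticPairs_comap_fst hind hpart hside' hdeg hk hc hB
  refine exists_forall_notMem_extensions (r := 3) (by lia) hpart hside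
    (fun h => by simpa using card_of_mem_monochromaticPairs h)
    (fun B hB => by have := card_of_mem_monochromaticPairs hB; lia) fun p => ?_
  refine (sum_pow_card_monochromaticPairs_le (degree_comap_fst_le hside' hdeg)
    (degree_colorClass_comap_fst_le hind hdeg hc)
    (card_edgeFinset_colorClass_comap_fst_le hind hpart hdeg hc) (by positivity) p).trans
    (rainbow_weight_le hk hn)

end LiftedGraph

theorem card_filter_prod_fst_eq {α β : Type*} [Fintype α] [Fintype β] [DecidableEq α] (a : α) :
    #{x : α × β | x.1 = a} = Fintype.card β := by
  rw [← univ_product_univ, filter_product_left (· = a), card_product, filter_eq' univ a]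
  simp

theorem card_edgeFinset_colorClass_le_div {V ι C : Type*} [Fintype V] [DecidableEq ι]
    [DecidableEq C] {side : V → ι} {c : V → V → C} (hsym : ∀ v w, c v w = c w v) {n Δ : ℕ} {a : C}
    (h : (#{x : V × V | side x.1 ≠ side x.2 ∧ c x.1 x.2 = a} : ℚ) ≤ 2 * n / (110 * Δ ^ 2)) :
    #(colorClass ((⊤ : SimpleGraph ι).comap side) (Sym2.lift ⟨c, hsym⟩) a).edgeFinset ≤
      n / (110 * Δ ^ 2) := by
  set H := colorClass ((⊤ : SimpleGraph ι).comap side) (Sym2.lift ⟨c, hsym⟩) a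
  have hpairs : #{x : V × V | side x.1 ≠ side x.2 ∧ c x.1 x.2 = a} = 2 * #H.edgeFinset :=
    H.two_mul_card_edgeFinset.symm
  rw [hpairs, mul_div_assoc] at h
  push_cast at h
  rw [← Nat.floor_div_eq_div (K := ℚ)]
  refine Nat.le_floor ?_
  push_cast
  linarith

theorem stmt18_general {W V ι C : Type*} [Fintype W] [Fintype V] [DecidableEq ι] [DecidableEq C]
    {n Δ k : ℕ} (G : SimpleGraph W) [DecidableRel G.Adj] (part : W → ι) (side : V → ι)
    (hind : ∀ u v, G.Adj u v → part u ≠ part v) (hpart : ∀ i, #{w | part w = i} ≤ n)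
    (hside : ∀ i, #{v | side v = i} = n) (hdeg : ∀ w, G.degree w ≤ Δ) (c : Sym2 V → C)
    (hk : 110 * Δ ^ 2 * k ≤ n)
    (hc : ∀ a, #(colorClass ((⊤ : SimpleGraph ι).comap side) c a).edgeFinset ≤ k) :
    ∃ f : W ↪ V, (∀ w, side (f w) = part w) ∧ Set.InjOn (fun e => c (e.map f)) G.edgeSet := by
  classical
  obtain ⟨f, hf⟩ := PartEmbedding.exists_forall_monochromaticPairs_notMem_extensions
    hind hpart hside hdeg hk hc
  exact ⟨f.1, f.2, f.injOn_color hf⟩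

/-- If `c` is a globally `(n/(110Δ²))`-bounded symmetric edge-coloring of the complete
`m`-partite graph `K_{m⊗n}` (vertices `Fin m × Fin n`, edges between distinct parts; the
global bound is stated for ordered pairs, whence the factor 2), and `G` is an
`m`-partite graph with parts of size at most `n` and maximum degree at most `Δ`, then
`K_{m⊗n}` contains a rainbow copy of `G` mapping the `i`-th part of `G` into the `i`-th
part of `K_{m⊗n}`. -/
theorem stmt18 {W : Type*} [Fintype W] [DecidableEq W] (m n Δ : ℕ) (hn : 5 ≤ n)
    (G : SimpleGraph W) [DecidableRel G.Adj] (part : W → Fin m)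
    (hind : ∀ u v, G.Adj u v → part u ≠ part v)
    (hsize : ∀ i : Fin m, (Finset.univ.filter (fun w => part w = i)).card ≤ n)
    (hdeg : ∀ v, G.degree v ≤ Δ)
    (c : (Fin m × Fin n) → (Fin m × Fin n) → ℕ)
    (hsym : ∀ v w, c v w = c w v)
    (hglob : ∀ col : ℕ,
      ((Finset.univ.filter (fun e : (Fin m × Fin n) × (Fin m × Fin n) =>
        e.1.1 ≠ e.2.1 ∧ c e.1 e.2 = col)).card : ℚ) ≤ 2 * n / (110 * Δ ^ 2)) :
    ∃ f : W → Fin m × Fin n, Function.Injective f ∧ (∀ w, (f w).1 = part w) ∧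
      ∀ u v u' v', G.Adj u v → G.Adj u' v' → s(u, v) ≠ s(u', v') →
        c (f u) (f v) ≠ c (f u') (f v') := by
  obtain ⟨f, hf, hinj⟩ := stmt18_general G part Prod.fst hind hsize
    (fun i => by simp [card_filter_prod_fst_eq]) hdeg (Sym2.lift ⟨c, hsym⟩)
    (Nat.mul_div_le n _) fun a => card_edgeFinset_colorClass_le_div hsym (hglob a)
  exact ⟨f, f.injective, hf, fun u v u' v' h h' hne => hinj.ne h h' hne⟩
end
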